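/- arXiv:2009.00847 — 8 statements merged into one kernel-verified Lean document; each statement's English description precedes it below -/
import Mathlib

section
/- Let K be a field, f ∈ K[x_1,…,x_n] a symmetric polynomial, ψ : {1,…,n} → {1,…,ℓ} a surjective map, T : K[x_1,…,x_n] → K[z_1,…,z_ℓ] the K-algebra homomorphism with T(x_i) = z_{ψ(i)}, and u : {1,…,ℓ} → {1,…,n} a section of ψ (i.e. ψ(u(c)) = c for all c). Define g_c = T(∂f/∂x_{u(c)}) for c = 1,…,ℓ. Then for all 1 ≤ i < j ≤ ℓ, the polynomial z_i − z_j divides g_i − g_j in K[z_1,…,z_ℓ]. -/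
/-!
Let `a = u i`, `b = u j` and let `τ` be the transposition `(a b)`. Symmetry of `f` gives
`∂f/∂x_b = τ(∂f/∂x_a)`. Modulo `x_a - x_b` the transposition acts trivially on polynomials
(`X_sub_X_dvd_sub_rename_swap`), so `x_a - x_b` divides `∂f/∂x_a - ∂f/∂x_b`; applying the
homomorphism `T`, which sends `x_a - x_b` to `z_i - z_j`, gives the claim.
-/

theorem X_sub_X_dvd_sub_rename_swap {σ R : Type*} [DecidableEq σ] [CommRing R] (a b : σ)
    (p : MvPolynomial σ R) :
    (MvPolynomial.X a - MvPolynomial.X b) ∣ p - MvPolynomial.rename (Equiv.swap a b) p := by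
  induction p using MvPolynomial.induction_on with
  | C r => simp
  | add p q hp hq =>
    rw [map_add, add_sub_add_comm]
    exact dvd_add hp hq
  | mul_X p k hp =>
    have hk : (MvPolynomial.X a - MvPolynomial.X b : MvPolynomial σ R) ∣
        MvPolynomial.X k - MvPolynomial.X (Equiv.swap a b k) := by
      rcases eq_or_ne k a with rfl | hka
      · simp
      rcases eq_or_ne k b with rfl | hkb
      · rw [Equiv.swap_apply_right]
        exact (dvd_sub_comm).mp dvd_rfl
      · simp [Equiv.swap_apply_of_ne_of_ne hka hkb]
    rw [map_mul, MvPolynomial.rename_X]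
    exact dvd_mul_sub_mul hp hk

/-- For a symmetric `f ∈ K[x_1,…,x_n]`, a surjective `ψ : {1,…,n} → {1,…,ℓ}` with section `u`,
and `g_c = T(∂f/∂x_{u(c)})` where `T = rename ψ`, the polynomial `z_i − z_j` divides
`g_i − g_j` for all `i < j`. -/
theorem stmt4 {K : Type*} [Field K] {n ℓ : ℕ}
    (f : MvPolynomial (Fin n) K) (hf : f.IsSymmetric)
    (ψ : Fin n → Fin ℓ) (hψ : Function.Surjective ψ)
    (u : Fin ℓ → Fin n) (hu : ∀ c, ψ (u c) = c)
    (i j : Fin ℓ) (hij : i < j) :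
    (MvPolynomial.X i - MvPolynomial.X j) ∣
      (MvPolynomial.rename ψ (MvPolynomial.pderiv (u i) f) -
        MvPolynomial.rename ψ (MvPolynomial.pderiv (u j) f)) := by
  have hswap : MvPolynomial.pderiv (u j) f =
      MvPolynomial.rename (Equiv.swap (u i) (u j)) (MvPolynomial.pderiv (u i) f) := by
    have h := MvPolynomial.pderiv_rename (Equiv.swap (u i) (u j)).injective (u i) f
    rwa [hf, Equiv.swap_apply_left] at h
  have h := map_dvd (MvPolynomial.rename ψ)
    (X_sub_X_dvd_sub_rename_swap (u i) (u j) (MvPolynomial.pderiv (u i) f))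
  rw [← hswap] at h
  simpa only [map_sub, MvPolynomial.rename_X, hu] using h
end

section
/- Let K be a field, f ∈ K[x_1,…,x_n] a symmetric polynomial, ψ : {1,…,n} → {1,…,ℓ} a surjective map, T : K[x_1,…,x_n] → K[z_1,…,z_ℓ] the K-algebra homomorphism with T(x_i) = z_{ψ(i)}, and u : {1,…,ℓ} → {1,…,n} a section of ψ. Define g_c = T(∂f/∂x_{u(c)}) for c = 1,…,ℓ (this is independent of the choice of section). Then for every permutation σ of {1,…,ℓ} satisfying |ψ^{-1}(c)| = |ψ^{-1}(σ(c))| for all c, one has σ(g_c) = g_{σ(c)} for all c, where σ acts on K[z_1,…,z_ℓ] by permuting the variables. In particular, when ψ is the map attached to a partition λ of n, the sequence (g_1,…,g_ℓ) is S_λ-equivariant. -/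
/-!
Since the fibers of `ψ` over `c` and `σ c` have the same size, `σ` lifts to a permutation `τ` of
the `x`-variables with `ψ ∘ τ = σ ∘ ψ` (`exists_perm_lift`). Correcting `τ` by a transposition
inside the fiber over `σ c`, one may assume `τ (u c) = u (σ c)`. As `f` is symmetric, `τ` carries
`∂f/∂x_i` to `∂f/∂x_{τ i}` (`rename_pderiv_of_isSymmetric`), and applying `T = rename ψ` gives
the claim.
-/

theorem rename_pderiv_of_isSymmetric {R ι : Type*} [CommSemiring R]
    {f : MvPolynomial ι R} (hf : f.IsSymmetric) (τ : Equiv.Perm ι) (i : ι) :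
    MvPolynomial.rename τ (MvPolynomial.pderiv i f) = MvPolynomial.pderiv (τ i) f := by
  rw [← MvPolynomial.pderiv_rename τ.injective, hf τ]

/-- A permutation of the target that preserves the fiber sizes of `ψ` lifts to a permutation of
the source, and the lift can be chosen to send a given `i` to any given point `j` of the fiber
over `σ (ψ i)`. -/
theorem exists_perm_lift {α β : Type*} [Fintype α] [DecidableEq α] [DecidableEq β]
    (ψ : α → β) (σ : Equiv.Perm β)
    (hσ : ∀ c : β, (Finset.univ.filter fun i : α => ψ i = c).card =
      (Finset.univ.filter fun i : α => ψ i = σ c).card)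
    (i j : α) (hij : ψ j = σ (ψ i)) :
    ∃ τ : Equiv.Perm α, (∀ k, ψ (τ k) = σ (ψ k)) ∧ τ i = j := by
  have hcard : ∀ c, Fintype.card {k // σ (ψ k) = c} = Fintype.card {k // ψ k = c} := by
    intro c
    rw [Fintype.card_subtype, Fintype.card_subtype]
    have h := hσ (σ.symm c)
    rw [Equiv.apply_symm_apply] at h
    rw [← h]
    simp only [Equiv.eq_symm_apply]
  let τ : Equiv.Perm α := Equiv.ofFiberEquiv (f := fun k => σ (ψ k)) (g := ψ)
    fun c => Fintype.equivOfCardEq (hcard c)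
  have hτ : ∀ k, ψ (τ k) = σ (ψ k) := fun k => Equiv.ofFiberEquiv_map _ k
  -- `τ i` and `j` lie in the same fiber, so swapping them does not affect `ψ`.
  refine ⟨τ.trans (Equiv.swap (τ i) j), fun k => ?_, by simp⟩
  rw [Equiv.trans_apply, ← hτ k, Equiv.swap_apply_def]
  split_ifs with h1 h2
  · rw [h1, hij, hτ]
  · rw [h2, hij, hτ]
  · rfl

/-- For a symmetric `f ∈ K[x_1,…,x_n]`, a surjective `ψ : {1,…,n} → {1,…,ℓ}` with section `u`,
and `g_c = T(∂f/∂x_{u(c)})` where `T = rename ψ`: every permutation `σ` of `{1,…,ℓ}` whose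
fibers satisfy `|ψ⁻¹(c)| = |ψ⁻¹(σ(c))|` for all `c` satisfies `σ(g_c) = g_{σ(c)}`,
where `σ` acts on `K[z_1,…,z_ℓ]` by permuting variables. -/
theorem stmt5 {K : Type*} [Field K] {n ℓ : ℕ}
    (f : MvPolynomial (Fin n) K) (hf : f.IsSymmetric)
    (ψ : Fin n → Fin ℓ) (hψ : Function.Surjective ψ)
    (u : Fin ℓ → Fin n) (hu : ∀ c, ψ (u c) = c)
    (σ : Equiv.Perm (Fin ℓ))
    (hσ : ∀ c : Fin ℓ,
      (Finset.univ.filter fun i : Fin n => ψ i = c).card =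
        (Finset.univ.filter fun i : Fin n => ψ i = σ c).card)
    (c : Fin ℓ) :
    MvPolynomial.rename σ (MvPolynomial.rename ψ (MvPolynomial.pderiv (u c) f)) =
      MvPolynomial.rename ψ (MvPolynomial.pderiv (u (σ c)) f) := by
  obtain ⟨τ, hτ, hτc⟩ := exists_perm_lift ψ σ hσ (u c) (u (σ c)) (by rw [hu, hu])
  rw [← hτc, ← rename_pderiv_of_isSymmetric hf τ, MvPolynomial.rename_rename,
    MvPolynomial.rename_rename]
  congr 2
  funext k
  exact (hτ k).symm
end

section
/- Let K be a field and q_1,…,q_ℓ ∈ K[z_1,…,z_ℓ] be polynomials such that (z_i − z_j) divides (q_i − q_j) for all i ≠ j. Then there exists a unique family of polynomials q_I ∈ K[z_1,…,z_ℓ], indexed by the nonempty subsets I of {1,…,ℓ}, such that q_{{i}} = q_i for every i and, for every I with |I| ≥ 2 and all distinct a, b ∈ I, (z_a − z_b)·q_I = q_{I∖{a}} − q_{I∖{b}}. (In particular all divided differences of (q_1,…,q_ℓ) are polynomials and are independent of the choice of the pair of indices in the defining recurrence.) -/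
/-!
Uniqueness holds because the polynomial ring is a domain: the recurrence determines `Q I` from the
values on smaller sets.

For existence, the family is built up by the cardinality of `I`. Suppose it is known for smaller
sets and write `D a = Q (I.erase a)`. The recurrences for the sets `I.erase a`, `I.erase b`,
`I.erase c` combine to `(z_b - z_c) * (D a - D b) = (z_a - z_b) * (D b - D c)`
(`cross_identity`). Setting `z_a = z_b` kills the right-hand side but not `z_b - z_c`, so
`z_a - z_b` divides `D a - D b` (`X_sub_X_dvd_of_mul`). The quotient `r` is independent of the pair
`a, b`, again by the cross identity (`exists_common_quotient`), and is the value of `Q` at `I`.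
-/

namespace DividedDifference

open MvPolynomial

variable {K σ : Type*} [Field K]

lemma X_sub_X_ne_zero {a b : σ} (h : a ≠ b) : (X a - X b : MvPolynomial σ K) ≠ 0 :=
  sub_ne_zero.mpr fun e => h (X_injective e)

variable [DecidableEq σ]

/-- The substitution `z_a ↦ z_b`. -/
noncomputable def identify (a b : σ) : MvPolynomial σ K →ₐ[K] MvPolynomial σ K :=
  aeval (Function.update X a (X b))

lemma X_sub_X_dvd_sub_identify (a b : σ) (p : MvPolynomial σ K) :
    (X a - X b : MvPolynomial σ K) ∣ p - identify a b p := by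
  induction p using MvPolynomial.induction_on with
  | C k => simp [identify]
  | add p r hp hr =>
    rw [map_add, add_sub_add_comm]
    exact dvd_add hp hr
  | mul_X p i hp =>
    have hX : (X a - X b : MvPolynomial σ K) ∣ X i - identify a b (X i) := by
      by_cases h : i = a
      · subst h
        simp [identify]
      · simp [identify, h]
    have key : p * X i - identify a b (p * X i)
        = (p - identify a b p) * X i + identify a b p * (X i - identify a b (X i)) := by
      rw [map_mul]
      ring
    rw [key]
    exact dvd_add (hp.mul_right _) (hX.mul_left _)

/-- The linear forms `z_a - z_b` and `z_b - z_c` are coprime, in the form of Euclid's lemma. -/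
lemma X_sub_X_dvd_of_mul {a b c : σ} (hac : a ≠ c) (hab : a ≠ b) (hbc : b ≠ c)
    {p r : MvPolynomial σ K} (h : (X b - X c) * p = (X a - X b) * r) :
    (X a - X b : MvPolynomial σ K) ∣ p := by
  have h' := congrArg (identify a b) h
  simp only [map_mul, map_sub] at h'
  have e1 : identify a b (X a : MvPolynomial σ K) = X b := by simp [identify]
  have e2 : identify a b (X b : MvPolynomial σ K) = X b := by simp [identify, hab.symm]
  have e3 : identify a b (X c : MvPolynomial σ K) = X c := by simp [identify, hac.symm]
  rw [e1, e2, e3, sub_self, zero_mul] at h'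
  have h0 := (mul_eq_zero.mp h').resolve_left (X_sub_X_ne_zero hbc)
  simpa [h0] using X_sub_X_dvd_sub_identify a b p

/-- The recurrence for divided differences at the single set `I`. -/
def RecurrenceAt (Q : Finset σ → MvPolynomial σ K) (I : Finset σ) : Prop :=
  ∀ a ∈ I, ∀ b ∈ I, a ≠ b → (X a - X b) * Q I = Q (I.erase a) - Q (I.erase b)

lemma cross_identity {Q : Finset σ → MvPolynomial σ K} {I : Finset σ}
    (hQ : ∀ a ∈ I, RecurrenceAt Q (I.erase a)) {a b c : σ} (ha : a ∈ I) (hb : b ∈ I) (hc : c ∈ I)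
    (hab : a ≠ b) (hac : a ≠ c) (hbc : b ≠ c) :
    (X b - X c) * (Q (I.erase a) - Q (I.erase b))
      = (X a - X b) * (Q (I.erase b) - Q (I.erase c)) := by
  have h1 := hQ a ha b (by simp [*, hab.symm]) c (by simp [*, hac.symm]) hbc
  have h2 := hQ b hb a (by simp [*]) c (by simp [*, hbc.symm]) hac
  have h3 := hQ c hc a (by simp [*]) b (by simp [*]) hab
  rw [Finset.erase_right_comm (a := b) (b := a)] at h2
  rw [Finset.erase_right_comm (a := c) (b := a), Finset.erase_right_comm (a := c) (b := b)] at h3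
  linear_combination h1 - h2 + h3

/-- If `z_a - z_b` divides `Q (I.erase a) - Q (I.erase b)` for one pair, then by the cross identity
the quotient serves all pairs simultaneously. -/
lemma exists_common_quotient {Q : Finset σ → MvPolynomial σ K} {I : Finset σ}
    (hQ : ∀ a ∈ I, RecurrenceAt Q (I.erase a)) {a b : σ} (ha : a ∈ I) (hb : b ∈ I) (hab : a ≠ b)
    (hdvd : (X a - X b : MvPolynomial σ K) ∣ Q (I.erase a) - Q (I.erase b)) :
    ∃ r, ∀ c ∈ I, ∀ d ∈ I, c ≠ d → (X c - X d) * r = Q (I.erase c) - Q (I.erase d) := by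
  obtain ⟨r, hr⟩ := hdvd
  have base : ∀ c ∈ I, Q (I.erase b) - Q (I.erase c) = (X b - X c) * r := by
    intro c hc
    by_cases hbc : b = c
    · simp [hbc]
    by_cases hac : a = c
    · rw [← hac]
      linear_combination -hr
    apply mul_left_cancel₀ (X_sub_X_ne_zero (K := K) hab)
    linear_combination (X b - X c) * hr - cross_identity hQ ha hb hc hab hac hbc
  refine ⟨r, fun c hc d hd _ => ?_⟩
  linear_combination base c hc - base d hd

lemma exists_extension {q : σ → MvPolynomial σ K}
    (hq : ∀ i j : σ, i ≠ j → (X i - X j) ∣ (q i - q j))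
    {Q : Finset σ → MvPolynomial σ K} (hs : ∀ i, Q {i} = q i)
    {I : Finset σ} (hI : 2 ≤ I.card)
    (hrec : ∀ J : Finset σ, 2 ≤ J.card → J.card < I.card → RecurrenceAt Q J) :
    ∃ r, ∀ c ∈ I, ∀ d ∈ I, c ≠ d → (X c - X d) * r = Q (I.erase c) - Q (I.erase d) := by
  have hQ : ∀ a ∈ I, RecurrenceAt Q (I.erase a) := by
    intro a ha
    have hcard := Finset.card_erase_add_one ha
    by_cases h2 : 2 ≤ (I.erase a).card
    · exact hrec _ h2 (by omega)
    · intro b hb c hc hbc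
      exact absurd (Finset.card_le_one.mp (by omega) b hb c hc) hbc
  obtain ⟨a, ha, b, hb, hab⟩ := Finset.one_lt_card.mp hI
  refine exists_common_quotient hQ ha hb hab ?_
  by_cases hc : ∃ c ∈ I, a ≠ c ∧ b ≠ c
  · obtain ⟨c, hc, hac, hbc⟩ := hc
    exact X_sub_X_dvd_of_mul hac hab hbc (cross_identity hQ ha hb hc hab hac hbc)
  · have hpair : I = {a, b} := by
      ext x
      simp only [Finset.mem_insert, Finset.mem_singleton]
      constructor
      · intro hx
        by_contra hne
        push Not at hne
        exact hc ⟨x, hx, hne.1.symm, hne.2.symm⟩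
      · rintro (rfl | rfl) <;> assumption
    have e1 : I.erase a = {b} := by
      rw [hpair]
      ext x
      simp only [Finset.mem_erase, Finset.mem_insert, Finset.mem_singleton]
      grind
    have e2 : I.erase b = {a} := by
      rw [hpair]
      ext x
      simp only [Finset.mem_erase, Finset.mem_insert, Finset.mem_singleton]
      grind
    rw [e1, e2, hs, hs, ← neg_sub (q a), dvd_neg]
    exact hq a b hab

lemma exists_family_le {q : σ → MvPolynomial σ K}
    (hq : ∀ i j : σ, i ≠ j → (X i - X j) ∣ (q i - q j)) (n : ℕ) :
    ∃ Q : Finset σ → MvPolynomial σ K, (∀ i, Q {i} = q i) ∧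
      ∀ I : Finset σ, 2 ≤ I.card → I.card ≤ n → RecurrenceAt Q I := by
  induction n with
  | zero =>
    -- The recurrence is void here; summing `q` over `I` is merely a formula that gives `q i`
    -- on singletons.
    exact ⟨fun I => ∑ i ∈ I, q i, by simp, fun I h2 h0 => by omega⟩
  | succ n ih =>
    obtain ⟨Q, hs, hrec⟩ := ih
    have hex : ∀ I : Finset σ, ∃ r, 2 ≤ I.card → I.card = n + 1 →
        ∀ c ∈ I, ∀ d ∈ I, c ≠ d → (X c - X d) * r = Q (I.erase c) - Q (I.erase d) := by
      intro I
      by_cases h : 2 ≤ I.card ∧ I.card = n + 1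
      · obtain ⟨r, hr⟩ := exists_extension hq hs h.1
          (fun J h2 hlt => hrec J h2 (by omega))
        exact ⟨r, fun _ _ => hr⟩
      · exact ⟨0, fun h1 h2 => absurd ⟨h1, h2⟩ h⟩
    choose R hR using hex
    refine ⟨fun I => if 2 ≤ I.card ∧ I.card = n + 1 then R I else Q I, by simp [hs], ?_⟩
    intro I h2 hle a ha b hb hab
    have ca := Finset.card_erase_add_one ha
    have cb := Finset.card_erase_add_one hb
    have na : ¬ (2 ≤ (I.erase a).card ∧ (I.erase a).card = n + 1) := by omega
    have nb : ¬ (2 ≤ (I.erase b).card ∧ (I.erase b).card = n + 1) := by omega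
    simp only [if_neg na, if_neg nb]
    split_ifs with h
    · exact hR I h.1 h.2 a ha b hb hab
    · exact hrec I h2 (by omega) a ha b hb hab

end DividedDifference

/-- Existence and uniqueness of divided differences: if `(z_i − z_j) ∣ (q_i − q_j)` for all
`i ≠ j`, there is a unique family `Q_I` (over nonempty `I ⊆ {1,…,ℓ}`) with `Q_{{i}} = q_i` and
`(z_a − z_b)·Q_I = Q_{I∖{a}} − Q_{I∖{b}}` for `|I| ≥ 2` and distinct `a, b ∈ I`. -/
theorem stmt6 {K : Type*} [Field K] {ℓ : ℕ}
    (q : Fin ℓ → MvPolynomial (Fin ℓ) K)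
    (hq : ∀ i j : Fin ℓ, i ≠ j →
      (MvPolynomial.X i - MvPolynomial.X j) ∣ (q i - q j)) :
    ∃ Q : Finset (Fin ℓ) → MvPolynomial (Fin ℓ) K,
      ((∀ i : Fin ℓ, Q {i} = q i) ∧
        ∀ I : Finset (Fin ℓ), 2 ≤ I.card → ∀ a ∈ I, ∀ b ∈ I, a ≠ b →
          (MvPolynomial.X a - MvPolynomial.X b) * Q I = Q (I.erase a) - Q (I.erase b)) ∧
      ∀ Q' : Finset (Fin ℓ) → MvPolynomial (Fin ℓ) K,
        ((∀ i : Fin ℓ, Q' {i} = q i) ∧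
          ∀ I : Finset (Fin ℓ), 2 ≤ I.card → ∀ a ∈ I, ∀ b ∈ I, a ≠ b →
            (MvPolynomial.X a - MvPolynomial.X b) * Q' I = Q' (I.erase a) - Q' (I.erase b)) →
        ∀ I : Finset (Fin ℓ), I.Nonempty → Q' I = Q I := by
  obtain ⟨Q, hs, hrec⟩ := DividedDifference.exists_family_le hq ℓ
  have hrec' : ∀ I : Finset (Fin ℓ), 2 ≤ I.card → DividedDifference.RecurrenceAt Q I :=
    fun I h2 => hrec I h2 (by simpa using I.card_le_univ)
  refine ⟨Q, ⟨hs, hrec'⟩, ?_⟩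
  rintro Q' ⟨hs', hq'⟩ I
  induction I using Finset.strongInduction with
  | H I ih =>
    intro hne
    by_cases h2 : 2 ≤ I.card
    · obtain ⟨a, ha, b, hb, hab⟩ := Finset.one_lt_card.mp h2
      apply mul_left_cancel₀ (DividedDifference.X_sub_X_ne_zero (K := K) hab)
      rw [hq' I h2 a ha b hb hab, hrec' I h2 a ha b hb hab,
        ih _ (Finset.erase_ssubset ha) ⟨b, by simp [hb, hab.symm]⟩,
        ih _ (Finset.erase_ssubset hb) ⟨a, by simp [ha, hab]⟩]
    · have hpos := hne.card_pos
      obtain ⟨i, rfl⟩ := Finset.card_eq_one.mp (show I.card = 1 by omega)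
      rw [hs, hs']
end

section
/- Let K be a field, λ = (n_1^{ℓ_1} ⋯ n_r^{ℓ_r}) a partition of n of length ℓ, and (q_1,…,q_ℓ) an S_λ-equivariant sequence in K[z_1,…,z_ℓ] with (z_i − z_j) dividing (q_i − q_j) for all i ≠ j; let (q_I) be its divided differences. Then for every k ∈ {0,…,r−1} and every t ∈ {1,…,ℓ_{k+1}}, the polynomial ∑_{i=τ_k+1}^{τ_k+t} q_{{i} ∪ {τ_k+t+1, τ_k+t+2, …, ℓ}} is invariant under every permutation of the variables z_{τ_k+1},…,z_{τ_k+t} fixing the remaining variables. -/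
/-! The permutation `σ` only moves indices inside the block `k`, so it lies in `S_λ`
(`PartitionOf.inSlambda_of_fixes`). Equivariance of the `q_i` propagates to all divided differences,
`σ(q_I) = q_{σ(I)}` (`rename_dividedDifference`), by induction on `|I|`: apply `σ` to the defining
relation and cancel the nonzero factor `z_{σ(a)} - z_{σ(b)}`. As `σ` fixes every index
`≥ τ_k + t`, it merely permutes the summands. -/

/-- A partition `λ = (n_1^{ℓ_1} ⋯ n_r^{ℓ_r})` of `n`: integers `0 < n_1 < ⋯ < n_r`
(the `parts`) with multiplicities `ℓ_i ≥ 1` (the `mult`) and `∑ n_i ℓ_i = n`. -/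
structure PartitionOf (n : ℕ) where
  r : ℕ
  parts : Fin r → ℕ
  mult : Fin r → ℕ
  parts_pos : ∀ i, 0 < parts i
  parts_strictMono : StrictMono parts
  mult_pos : ∀ i, 0 < mult i
  sum_eq : ∑ i, parts i * mult i = n

namespace PartitionOf

variable {n : ℕ}

/-- The length `ℓ = ℓ_1 + ⋯ + ℓ_r` of the partition. -/
def length (lam : PartitionOf n) : ℕ := ∑ i, lam.mult i

/-- `τ_k = ℓ_1 + ⋯ + ℓ_k` (so `τ_0 = 0` and `τ_r = ℓ`). -/
def tau (lam : PartitionOf n) (k : ℕ) : ℕ :=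
  ∑ i ∈ Finset.univ.filter (fun j : Fin lam.r => (j : ℕ) < k), lam.mult i

/-- `σ ∈ S_λ`: the permutation `σ` of `{0,…,ℓ−1}` preserves each block
`{τ_k,…,τ_{k+1}−1}` (0-based indexing of the blocks `{τ_{k-1}+1,…,τ_k}`). -/
def InSlambda (lam : PartitionOf n) (σ : Equiv.Perm (Fin lam.length)) : Prop :=
  ∀ k : ℕ, k < lam.r → ∀ i : Fin lam.length,
    lam.tau k ≤ (i : ℕ) → (i : ℕ) < lam.tau (k + 1) →
      lam.tau k ≤ ((σ i : Fin lam.length) : ℕ) ∧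
        ((σ i : Fin lam.length) : ℕ) < lam.tau (k + 1)

end PartitionOf

theorem PartitionOf.tau_mono {n : ℕ} (lam : PartitionOf n) : Monotone lam.tau := by
  intro a b hab
  unfold PartitionOf.tau
  apply Finset.sum_le_sum_of_subset
  intro j hj
  simp only [Finset.mem_filter, Finset.mem_univ, true_and] at hj ⊢
  omega

theorem PartitionOf.tau_succ {n : ℕ} (lam : PartitionOf n) (k : ℕ) (hk : k < lam.r) :
    lam.tau (k + 1) = lam.tau k + lam.mult ⟨k, hk⟩ := by
  unfold PartitionOf.tau
  have h : Finset.univ.filter (fun j : Fin lam.r => (j : ℕ) < k + 1) =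
      insert ⟨k, hk⟩ (Finset.univ.filter (fun j : Fin lam.r => (j : ℕ) < k)) := by
    ext j
    simp only [Finset.mem_filter, Finset.mem_univ, true_and, Finset.mem_insert, Fin.ext_iff]
    omega
  rw [h, Finset.sum_insert (by simp), add_comm]

/-- A permutation fixing everything outside an interval maps that interval to itself: an index
mapped outside would be mapped to a fixed point. -/
theorem perm_mem_interval {N a b : ℕ} (σ : Equiv.Perm (Fin N))
    (hσ : ∀ i : Fin N, ((i : ℕ) < a ∨ b ≤ (i : ℕ)) → σ i = i)
    (i : Fin N) (hi : a ≤ (i : ℕ) ∧ (i : ℕ) < b) :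
    a ≤ (σ i : ℕ) ∧ (σ i : ℕ) < b := by
  by_contra h
  have h1 : σ (σ i) = σ i := hσ (σ i) (by omega)
  have h2 : σ i = i := σ.injective h1
  rw [h2] at h
  exact h hi

theorem PartitionOf.inSlambda_of_fixes {n : ℕ} (lam : PartitionOf n)
    (k : ℕ) (hk : k < lam.r) (t : ℕ) (ht2 : t ≤ lam.mult ⟨k, hk⟩)
    (σ : Equiv.Perm (Fin lam.length))
    (hσ : ∀ i : Fin lam.length,
      ((i : ℕ) < lam.tau k ∨ lam.tau k + t ≤ (i : ℕ)) → σ i = i) :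
    lam.InSlambda σ := by
  intro m _ i hi1 hi2
  by_cases h : (i : ℕ) < lam.tau k ∨ lam.tau k + t ≤ (i : ℕ)
  · rw [hσ i h]
    exact ⟨hi1, hi2⟩
  · have h' := perm_mem_interval σ hσ i (by omega)
    have hs := lam.tau_succ k hk
    -- the blocks are disjoint, so `i` lies in no block other than `k`
    rcases lt_trichotomy m k with hmk | rfl | hmk
    · have := lam.tau_mono (show m + 1 ≤ k from hmk)
      omega
    · omega
    · have := lam.tau_mono (show k + 1 ≤ m from hmk)
      omega

/-- Equivariance under a fixed permutation passes from a sequence to its divided differences. -/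
theorem rename_dividedDifference {K : Type*} [Field K] {ι : Type*} [DecidableEq ι]
    (q : ι → MvPolynomial ι K) (σ : Equiv.Perm ι)
    (hq : ∀ i, MvPolynomial.rename σ (q i) = q (σ i))
    (Q : Finset ι → MvPolynomial ι K) (hQ1 : ∀ i, Q {i} = q i)
    (hQ2 : ∀ I : Finset ι, 2 ≤ I.card → ∀ a ∈ I, ∀ b ∈ I, a ≠ b →
      (MvPolynomial.X a - MvPolynomial.X b) * Q I = Q (I.erase a) - Q (I.erase b))
    (I : Finset ι) (hI : I.Nonempty) :
    MvPolynomial.rename σ (Q I) = Q (I.image σ) := by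
  induction hc : I.card using Nat.strong_induction_on generalizing I with
  | _ c ih =>
    rcases Nat.lt_or_ge I.card 2 with h | h
    · obtain ⟨i, rfl⟩ : ∃ i, I = {i} := by
        rw [← Finset.card_eq_one]
        have := hI.card_pos
        omega
      rw [Finset.image_singleton, hQ1, hQ1, hq]
    · obtain ⟨a, ha, b, hb, hab⟩ := Finset.one_lt_card.mp h
      have herase : ∀ x ∈ I,
          MvPolynomial.rename σ (Q (I.erase x)) = Q ((I.image σ).erase (σ x)) := by
        intro x hx
        have hcard := Finset.card_erase_of_mem hx
        rw [← Finset.image_erase σ.injective]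
        exact ih _ (by omega) _ (Finset.card_pos.mp (by omega)) rfl
      have h1 := congrArg (MvPolynomial.rename σ) (hQ2 I h a ha b hb hab)
      have h2 := hQ2 (I.image σ) (by rwa [Finset.card_image_of_injective _ σ.injective])
        (σ a) (Finset.mem_image_of_mem _ ha) (σ b) (Finset.mem_image_of_mem _ hb)
        (σ.injective.ne hab)
      rw [map_mul, map_sub, map_sub, MvPolynomial.rename_X, MvPolynomial.rename_X,
        herase a ha, herase b hb, ← h2] at h1
      refine mul_left_cancel₀ (sub_ne_zero.mpr fun h0 => ?_) h1
      exact hab (σ.injective (MvPolynomial.X_injective h0))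

/-- For an `S_λ`-equivariant sequence `q` with divided differences `Q`, for each block `k` and
each `t ∈ {1,…,ℓ_{k+1}}`, the sum `∑_{i=τ_k+1}^{τ_k+t} q_{{i} ∪ {τ_k+t+1,…,ℓ}}`
(written in 0-based indexing) is invariant under every permutation of the variables
`z_{τ_k+1},…,z_{τ_k+t}` fixing the remaining variables. -/
theorem stmt8 {K : Type*} [Field K] {n : ℕ} (lam : PartitionOf n)
    (q : Fin lam.length → MvPolynomial (Fin lam.length) K)
    (hequi : ∀ σ : Equiv.Perm (Fin lam.length), lam.InSlambda σ →
      ∀ i, MvPolynomial.rename σ (q i) = q (σ i))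
    (hdvd : ∀ i j : Fin lam.length, i ≠ j →
      (MvPolynomial.X i - MvPolynomial.X j) ∣ (q i - q j))
    (Q : Finset (Fin lam.length) → MvPolynomial (Fin lam.length) K)
    (hQ1 : ∀ i : Fin lam.length, Q {i} = q i)
    (hQ2 : ∀ I : Finset (Fin lam.length), 2 ≤ I.card → ∀ a ∈ I, ∀ b ∈ I, a ≠ b →
      (MvPolynomial.X a - MvPolynomial.X b) * Q I = Q (I.erase a) - Q (I.erase b))
    (k : ℕ) (hk : k < lam.r) (t : ℕ) (ht1 : 1 ≤ t) (ht2 : t ≤ lam.mult ⟨k, hk⟩)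
    (σ : Equiv.Perm (Fin lam.length))
    (hσ : ∀ i : Fin lam.length,
      ((i : ℕ) < lam.tau k ∨ lam.tau k + t ≤ (i : ℕ)) → σ i = i) :
    MvPolynomial.rename σ
        (∑ i ∈ Finset.univ.filter (fun i : Fin lam.length =>
            lam.tau k ≤ (i : ℕ) ∧ (i : ℕ) < lam.tau k + t),
          Q (insert i
            (Finset.univ.filter fun a : Fin lam.length => lam.tau k + t ≤ (a : ℕ)))) =
      ∑ i ∈ Finset.univ.filter (fun i : Fin lam.length =>
          lam.tau k ≤ (i : ℕ) ∧ (i : ℕ) < lam.tau k + t),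
        Q (insert i
          (Finset.univ.filter fun a : Fin lam.length => lam.tau k + t ≤ (a : ℕ))) := by
  have hfilter : (Finset.univ.filter fun a : Fin lam.length => lam.tau k + t ≤ (a : ℕ)).image σ =
      Finset.univ.filter fun a : Fin lam.length => lam.tau k + t ≤ (a : ℕ) := by
    refine (Finset.image_congr fun a ha => ?_).trans Finset.image_id
    exact hσ a (Or.inr (by simpa using ha))
  rw [map_sum]
  have hmaps : ∀ i ∈ Finset.univ.filter (fun i : Fin lam.length =>
      lam.tau k ≤ (i : ℕ) ∧ (i : ℕ) < lam.tau k + t), σ i ∈ Finset.univ.filter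
        (fun i : Fin lam.length => lam.tau k ≤ (i : ℕ) ∧ (i : ℕ) < lam.tau k + t) := by
    intro i hi
    simp only [Finset.mem_filter, Finset.mem_univ, true_and] at hi ⊢
    exact perm_mem_interval σ hσ i hi
  refine Finset.sum_nbij σ hmaps σ.injective.injOn
    (Finset.surjOn_of_injOn_of_card_le σ hmaps σ.injective.injOn le_rfl) fun i _ => ?_
  rw [rename_dividedDifference q σ (hequi σ (lam.inSlambda_of_fixes k hk t ht2 σ hσ)) Q hQ1 hQ2 _
    (Finset.insert_nonempty _ _), Finset.image_insert, hfilter]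
end

section
/- Let K be a field, λ = (n_1^{ℓ_1} ⋯ n_r^{ℓ_r}) a partition of n of length ℓ, and (q_1,…,q_ℓ) an S_λ-equivariant sequence in K[z_1,…,z_ℓ] with (z_i − z_j) dividing (q_i − q_j) for all i ≠ j; let (q_I) be its divided differences. For 0 ≤ k ≤ r−1 define p_{τ_{k+1}} = ∑_{i=τ_k+1}^{τ_{k+1}} q_{{i} ∪ {τ_{k+1}+1, …, ℓ}}, and for 1 ≤ j < ℓ_{k+1} define p_{τ_k+j} = ∑_{t=1}^{j} e_{j−t}(z_{τ_k+t+2},…,z_{τ_{k+1}}) · ( ∑_{i=τ_k+1}^{τ_k+t} q_{{i} ∪ {τ_k+t+1, …, ℓ}} ), where e_m denotes the elementary symmetric polynomial of degree m in the indicated variables. Then: (1) every p_i (i = 1,…,ℓ) is S_λ-invariant, i.e. σ(p_i) = p_i for all σ ∈ S_λ; (2) if deg(q_i) ≤ d for all i, then deg(p_i) ≤ d − ℓ + i for all i = 1,…,ℓ; (3) in particular, if ℓ ≥ d + 2 then p_i = 0 for i = 1,…,ℓ−d−1. -/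
open MvPolynomial in
/-- The elementary symmetric polynomial of degree `m` in the variables `z_a`, `a ∈ S`. -/
noncomputable def esymmOn {K : Type*} [CommSemiring K] {ℓ : ℕ}
    (S : Finset (Fin ℓ)) (m : ℕ) : MvPolynomial (Fin ℓ) K :=
  ∑ A ∈ S.powersetCard m, ∏ a ∈ A, MvPolynomial.X a

/-- The symmetrized polynomial `p_{τ_k+j}` (for `1 ≤ j ≤ ℓ_{k+1}`, `0 ≤ k ≤ r−1`, 1-based
position `τ_k + j`) built from the divided differences `Q` of a sequence `q`:
`p_{τ_{k+1}} = ∑_{i=τ_k+1}^{τ_{k+1}} q_{{i} ∪ {τ_{k+1}+1,…,ℓ}}` and, for `j < ℓ_{k+1}`,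
`p_{τ_k+j} = ∑_{t=1}^{j} e_{j−t}(z_{τ_k+t+2},…,z_{τ_{k+1}}) ·
(∑_{i=τ_k+1}^{τ_k+t} q_{{i} ∪ {τ_k+t+1,…,ℓ}})`  (all written in 0-based indexing). -/
noncomputable def symP {K : Type*} [CommRing K] {n : ℕ} (lam : PartitionOf n)
    (Q : Finset (Fin lam.length) → MvPolynomial (Fin lam.length) K)
    (k : ℕ) (hk : k < lam.r) (j : ℕ) : MvPolynomial (Fin lam.length) K :=
  if j = lam.mult ⟨k, hk⟩ then
    ∑ i ∈ Finset.univ.filter (fun i : Fin lam.length =>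
        lam.tau k ≤ (i : ℕ) ∧ (i : ℕ) < lam.tau (k + 1)),
      Q (insert i (Finset.univ.filter fun a : Fin lam.length => lam.tau (k + 1) ≤ (a : ℕ)))
  else
    ∑ t ∈ Finset.Icc 1 j,
      esymmOn (Finset.univ.filter fun a : Fin lam.length =>
          lam.tau k + t + 1 ≤ (a : ℕ) ∧ (a : ℕ) < lam.tau (k + 1)) (j - t) *
        ∑ i ∈ Finset.univ.filter (fun i : Fin lam.length =>
            lam.tau k ≤ (i : ℕ) ∧ (i : ℕ) < lam.tau k + t),
          Q (insert i (Finset.univ.filter fun a : Fin lam.length => lam.tau k + t ≤ (a : ℕ)))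

open MvPolynomial

/-! ### Degree bounds with `deg 0 = -∞` -/

/-- `deg p ≤ e` for an integer `e`, with the convention `deg 0 = -∞`. -/
def DegLe {K : Type*} [CommSemiring K] {L : ℕ} (p : MvPolynomial (Fin L) K) (e : ℤ) : Prop :=
  p = 0 ∨ (p.totalDegree : ℤ) ≤ e

lemma DegLe.sub {K : Type*} [CommRing K] {L : ℕ} {p q : MvPolynomial (Fin L) K} {e : ℤ}
    (hp : DegLe p e) (hq : DegLe q e) : DegLe (p - q) e := by
  rcases hp with rfl | hp
  · rcases hq with rfl | hq
    · left; simp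
    · right; simpa using hq
  · rcases hq with rfl | hq
    · right; simpa using hp
    · right
      have := totalDegree_sub p q
      have h2 : ((max p.totalDegree q.totalDegree : ℕ) : ℤ) ≤ e := by
        rw [Nat.cast_max]; exact max_le hp hq
      omega

lemma DegLe.mul {K : Type*} [CommRing K] {L : ℕ} {p q : MvPolynomial (Fin L) K} {e f : ℤ}
    (hp : DegLe p e) (hq : DegLe q f) : DegLe (p * q) (e + f) := by
  rcases hp with rfl | hp
  · left; simp
  rcases hq with rfl | hq
  · left; simp
  right
  have := totalDegree_mul p q
  omega

lemma DegLe.sum {K : Type*} [CommRing K] {L : ℕ} {ι : Type*} (s : Finset ι)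
    (f : ι → MvPolynomial (Fin L) K) {e : ℤ} (h : ∀ i ∈ s, DegLe (f i) e) :
    DegLe (∑ i ∈ s, f i) e := by
  classical
  induction s using Finset.induction_on with
  | empty => left; simp
  | insert i s hi ih =>
    rw [Finset.sum_insert hi]
    have h1 := h i (by simp)
    have h2 := ih (fun j hj => h j (by simp [hj]))
    have h3 : DegLe (0 - ∑ i ∈ s, f i) e := DegLe.sub (Or.inl rfl) h2
    have h4 := h1.sub h3
    rwa [zero_sub, sub_neg_eq_add] at h4

lemma X_sub_X_ne_zero {K : Type*} [Field K] {L : ℕ} {a b : Fin L} (h : a ≠ b) :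
    (X a - X b : MvPolynomial (Fin L) K) ≠ 0 :=
  sub_ne_zero.mpr fun h' => h (X_injective h')

lemma totalDegree_X_sub_X {K : Type*} [Field K] {L : ℕ} {a b : Fin L} (h : a ≠ b) :
    (X a - X b : MvPolynomial (Fin L) K).totalDegree = 1 := by
  have hh : (X a - X b : MvPolynomial (Fin L) K).IsHomogeneous 1 :=
    (isHomogeneous_X K a).sub (isHomogeneous_X K b)
  exact hh.totalDegree (X_sub_X_ne_zero h)

lemma degLe_esymmOn {K : Type*} [Field K] {L : ℕ} (S : Finset (Fin L)) (m : ℕ) :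
    DegLe (esymmOn S m : MvPolynomial (Fin L) K) m := by
  refine DegLe.sum _ _ fun A hA => Or.inr ?_
  rw [Finset.mem_powersetCard] at hA
  have h := totalDegree_finsetProd A (fun a => (X a : MvPolynomial (Fin L) K))
  simp only [totalDegree_X, Finset.sum_const, smul_eq_mul, mul_one] at h
  omega

/-! ### Divided differences -/

/-- Each step of the recursion divides by a polynomial of degree one. -/
lemma degLe_dd {K : Type*} [Field K] {L : ℕ} (Q : Finset (Fin L) → MvPolynomial (Fin L) K)
    (hQ2 : ∀ I : Finset (Fin L), 2 ≤ I.card → ∀ a ∈ I, ∀ b ∈ I, a ≠ b →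
      (X a - X b) * Q I = Q (I.erase a) - Q (I.erase b))
    (d : ℕ) (hd : ∀ i, (Q {i}).totalDegree ≤ d) :
    ∀ (c : ℕ) (I : Finset (Fin L)), I.card = c + 1 → DegLe (Q I) (d - c) := by
  intro c
  induction c with
  | zero =>
    intro I hI
    obtain ⟨i, rfl⟩ := Finset.card_eq_one.mp hI
    right
    have := hd i
    simpa using this
  | succ c ih =>
    intro I hI
    obtain ⟨a, ha, b, hb, hab⟩ := Finset.one_lt_card.mp (by omega : 1 < I.card)
    have h := hQ2 I (by omega) a ha b hb hab
    have h1 : DegLe (Q (I.erase a) - Q (I.erase b)) (d - c) :=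
      (ih _ (by rw [Finset.card_erase_of_mem ha]; omega)).sub
        (ih _ (by rw [Finset.card_erase_of_mem hb]; omega))
    by_cases h0 : Q I = 0
    · exact Or.inl h0
    · rw [← h] at h1
      rcases h1 with h1 | h1
      · exact absurd h1 (mul_ne_zero (X_sub_X_ne_zero hab) h0)
      · right
        rw [totalDegree_mul_of_isDomain (X_sub_X_ne_zero hab) h0, totalDegree_X_sub_X hab] at h1
        push_cast at h1 ⊢
        linarith

/-- Divided differences inherit equivariance from the sequence they are built on. -/
lemma rename_dd {K : Type*} [Field K] {L : ℕ} (Q : Finset (Fin L) → MvPolynomial (Fin L) K)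
    (hQ2 : ∀ I : Finset (Fin L), 2 ≤ I.card → ∀ a ∈ I, ∀ b ∈ I, a ≠ b →
      (X a - X b) * Q I = Q (I.erase a) - Q (I.erase b))
    (σ : Equiv.Perm (Fin L)) (h1 : ∀ i, rename σ (Q {i}) = Q {σ i}) :
    ∀ (c : ℕ) (I : Finset (Fin L)), I.card = c + 1 → rename σ (Q I) = Q (I.image σ) := by
  intro c
  induction c with
  | zero =>
    intro I hI
    obtain ⟨i, rfl⟩ := Finset.card_eq_one.mp hI
    simpa using h1 i
  | succ c ih =>
    intro I hI
    obtain ⟨a, ha, b, hb, hab⟩ := Finset.one_lt_card.mp (by omega : 1 < I.card)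
    have h := congrArg (rename σ) (hQ2 I (by omega) a ha b hb hab)
    have hσ : σ a ≠ σ b := fun h => hab (σ.injective h)
    have h' := hQ2 (I.image σ)
      (by rw [Finset.card_image_of_injective _ σ.injective]; omega)
      (σ a) (Finset.mem_image_of_mem _ ha) (σ b) (Finset.mem_image_of_mem _ hb) hσ
    rw [map_mul, map_sub, map_sub, rename_X, rename_X,
      ih (I.erase a) (by rw [Finset.card_erase_of_mem ha]; omega),
      ih (I.erase b) (by rw [Finset.card_erase_of_mem hb]; omega),
      Finset.image_erase σ.injective, Finset.image_erase σ.injective, ← h'] at h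
    exact mul_left_cancel₀ (X_sub_X_ne_zero hσ) h

/-! ### Elementary symmetric polynomials in a subset of the variables -/

lemma rename_esymmOn {K : Type*} [Field K] {L : ℕ} (σ : Equiv.Perm (Fin L))
    (S : Finset (Fin L)) (m : ℕ) :
    rename σ (esymmOn S m : MvPolynomial (Fin L) K) = esymmOn (S.image σ) m := by
  unfold esymmOn
  rw [map_sum]
  refine Finset.sum_bij (fun A _ => A.image σ) ?_ ?_ ?_ ?_
  · intro A hA
    rw [Finset.mem_powersetCard] at hA ⊢
    exact ⟨Finset.image_subset_image hA.1,
      by rw [Finset.card_image_of_injective _ σ.injective, hA.2]⟩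
  · intro A _ B _ h
    exact Finset.image_injective σ.injective h
  · intro B hB
    rw [Finset.mem_powersetCard] at hB
    obtain ⟨A, hA, rfl⟩ := Finset.subset_image_iff.mp hB.1
    refine ⟨A, ?_, rfl⟩
    rw [Finset.mem_powersetCard]
    exact ⟨hA, by rw [← hB.2, Finset.card_image_of_injective _ σ.injective]⟩
  · intro A _
    rw [map_prod, Finset.prod_image (fun _ _ _ _ h => σ.injective h)]
    simp

lemma esymmOn_zero {K : Type*} [Field K] {L : ℕ} (S : Finset (Fin L)) :
    (esymmOn S 0 : MvPolynomial (Fin L) K) = 1 := by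
  simp [esymmOn]

lemma esymmOn_insert {K : Type*} [Field K] {L : ℕ} (S : Finset (Fin L)) (y : Fin L)
    (hy : y ∉ S) (m : ℕ) :
    (esymmOn (insert y S) (m + 1) : MvPolynomial (Fin L) K)
      = esymmOn S (m + 1) + X y * esymmOn S m := by
  unfold esymmOn
  have hmem : ∀ A ∈ S.powersetCard m, y ∉ A := fun A hA h =>
    hy ((Finset.mem_powersetCard.mp hA).1 h)
  rw [Finset.powersetCard_succ_insert hy, Finset.sum_union, Finset.sum_image, Finset.mul_sum]
  · congr 1
    exact Finset.sum_congr rfl fun A hA => Finset.prod_insert (hmem A hA)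
  · intro A hA B hB h
    rw [← Finset.erase_insert (hmem A hA), ← Finset.erase_insert (hmem B hB)]
    exact congrArg (fun T => T.erase y) h
  · rw [Finset.disjoint_left]
    intro A hA hA'
    obtain ⟨B, _, rfl⟩ := Finset.mem_image.mp hA'
    exact hy ((Finset.mem_powersetCard.mp hA).1 (Finset.mem_insert_self _ _))

/-! ### The symmetrized polynomial of one block -/

/-- `∑_{a ≤ i < a+t} q_{{i} ∪ {a+t, …, L-1}}`. -/
noncomputable def blockG {K : Type*} [Field K] {L : ℕ}
    (Q : Finset (Fin L) → MvPolynomial (Fin L) K) (a t : ℕ) : MvPolynomial (Fin L) K :=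
  ∑ i ∈ Finset.univ.filter (fun i : Fin L => a ≤ (i : ℕ) ∧ (i : ℕ) < a + t),
    Q (insert i (Finset.univ.filter fun c : Fin L => a + t ≤ (c : ℕ)))

/-- The indices `a+t+1, …, b-1` of the variables entering the elementary symmetric factor. -/
def blockS (L a b t : ℕ) : Finset (Fin L) :=
  Finset.univ.filter fun c : Fin L => a + t + 1 ≤ (c : ℕ) ∧ (c : ℕ) < b

/-- The `j`-th symmetrized polynomial of the block `[a, b)`, given for all `j ≤ b - a` by the
formula that defines `symP` for `j < b - a`. -/
noncomputable def blockP {K : Type*} [Field K] {L : ℕ}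
    (Q : Finset (Fin L) → MvPolynomial (Fin L) K) (a b j : ℕ) : MvPolynomial (Fin L) K :=
  ∑ t ∈ Finset.Icc 1 j, esymmOn (blockS L a b t) (j - t) * blockG Q a t

lemma image_eq_of_forall {L : ℕ} (σ : Equiv.Perm (Fin L)) (S : Finset (Fin L))
    (h : ∀ i ∈ S, σ i ∈ S) : S.image σ = S := by
  apply Finset.eq_of_subset_of_card_le
  · intro i hi
    obtain ⟨x, hx, rfl⟩ := Finset.mem_image.mp hi
    exact h x hx
  · rw [Finset.card_image_of_injective _ σ.injective]

lemma blockG_zero {K : Type*} [Field K] {L : ℕ}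
    (Q : Finset (Fin L) → MvPolynomial (Fin L) K) (a : ℕ) : blockG Q a 0 = 0 := by
  unfold blockG
  apply Finset.sum_eq_zero
  intro i hi
  simp only [Finset.mem_filter] at hi
  omega

lemma rename_blockG_of_stable {K : Type*} [Field K] {L : ℕ}
    (Q : Finset (Fin L) → MvPolynomial (Fin L) K) (σ : Equiv.Perm (Fin L))
    (hE : ∀ I : Finset (Fin L), I.Nonempty → rename σ (Q I) = Q (I.image σ)) (a t : ℕ)
    (h1 : ∀ i : Fin L, a ≤ (i : ℕ) → (i : ℕ) < a + t →
      a ≤ ((σ i : Fin L) : ℕ) ∧ ((σ i : Fin L) : ℕ) < a + t)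
    (h2 : ∀ i : Fin L, a + t ≤ (i : ℕ) → a + t ≤ ((σ i : Fin L) : ℕ)) :
    rename σ (blockG Q a t) = blockG Q a t := by
  unfold blockG
  rw [map_sum]
  have hlow := image_eq_of_forall σ
    (Finset.univ.filter (fun i : Fin L => a ≤ (i : ℕ) ∧ (i : ℕ) < a + t))
    (by intro i hi; simp only [Finset.mem_filter, Finset.mem_univ, true_and] at hi ⊢
        exact h1 i hi.1 hi.2)
  have hhigh := image_eq_of_forall σ
    (Finset.univ.filter (fun c : Fin L => a + t ≤ (c : ℕ)))
    (by intro i hi; simp only [Finset.mem_filter, Finset.mem_univ, true_and] at hi ⊢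
        exact h2 i hi)
  conv_rhs => rw [← hlow]
  rw [Finset.sum_image (fun _ _ _ _ h => σ.injective h)]
  refine Finset.sum_congr rfl fun i _ => ?_
  rw [hE _ (Finset.insert_nonempty _ _), Finset.image_insert, hhigh]

/-- The change of `blockG Q a (v+1)` under the transposition of the positions `a+v` and `a+v+1`. -/
lemma blockG_sub_rename_swap {K : Type*} [Field K] {L : ℕ}
    (Q : Finset (Fin L) → MvPolynomial (Fin L) K)
    (hQ2 : ∀ I : Finset (Fin L), 2 ≤ I.card → ∀ a ∈ I, ∀ b ∈ I, a ≠ b →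
      (X a - X b) * Q I = Q (I.erase a) - Q (I.erase b))
    (a v : ℕ) (x y : Fin L) (hx : (x : ℕ) = a + v) (hy : (y : ℕ) = a + v + 1)
    (hE : ∀ I : Finset (Fin L), I.Nonempty →
      rename (Equiv.swap x y) (Q I) = Q (I.image (Equiv.swap x y))) :
    blockG Q a (v + 1) - rename (Equiv.swap x y) (blockG Q a (v + 1))
      = (X x - X y) * blockG Q a v := by
  have hxy : x ≠ y := fun h => by rw [h] at hx; omega
  unfold blockG
  set H : Finset (Fin L) := Finset.univ.filter (fun c : Fin L => a + v + 2 ≤ (c : ℕ)) with hH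
  have hxH : x ∉ H := by simp [hH]; omega
  have hyH : y ∉ H := by simp [hH]; omega
  have e1 : Finset.univ.filter (fun c : Fin L => a + (v + 1) ≤ (c : ℕ)) = insert y H := by
    ext c
    simp only [hH, Finset.mem_filter, Finset.mem_univ, true_and, Finset.mem_insert, Fin.ext_iff]
    omega
  have e2 : Finset.univ.filter (fun c : Fin L => a + v ≤ (c : ℕ)) = insert x (insert y H) := by
    ext c
    simp only [hH, Finset.mem_filter, Finset.mem_univ, true_and, Finset.mem_insert, Fin.ext_iff]
    omega
  have e3 : Finset.univ.filter (fun i : Fin L => a ≤ (i : ℕ) ∧ (i : ℕ) < a + (v + 1))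
      = insert x (Finset.univ.filter (fun i : Fin L => a ≤ (i : ℕ) ∧ (i : ℕ) < a + v)) := by
    ext c
    simp only [Finset.mem_filter, Finset.mem_univ, true_and, Finset.mem_insert, Fin.ext_iff]
    omega
  have hHs : H.image (Equiv.swap x y) = H := by
    apply image_eq_of_forall
    intro i hi
    rwa [Equiv.swap_apply_of_ne_of_ne (ne_of_mem_of_not_mem hi hxH)
      (ne_of_mem_of_not_mem hi hyH)]
  rw [e1, e2, e3, Finset.sum_insert (by simp; omega), map_add, map_sum,
    hE _ (Finset.insert_nonempty _ _)]
  have e4 : (insert x (insert y H)).image (Equiv.swap x y) = insert x (insert y H) := by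
    rw [Finset.image_insert, Finset.image_insert, hHs, Equiv.swap_apply_left,
      Equiv.swap_apply_right, Finset.insert_comm]
  rw [e4, add_sub_add_left_eq_sub, ← Finset.sum_sub_distrib, Finset.mul_sum]
  refine Finset.sum_congr rfl fun i hi => ?_
  simp only [Finset.mem_filter, Finset.mem_univ, true_and] at hi
  have hix : i ≠ x := fun h => by rw [h] at hi; omega
  have hiy : i ≠ y := fun h => by rw [h] at hi; omega
  rw [hE _ (Finset.insert_nonempty _ _), Finset.image_insert, Finset.image_insert, hHs,
    Equiv.swap_apply_right, Equiv.swap_apply_of_ne_of_ne hix hiy]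
  rw [hQ2 (insert i (insert x (insert y H))) _ x (by simp) y (by simp) hxy]
  · congr 2
    · ext c
      simp only [Finset.mem_insert, Finset.mem_erase]
      constructor
      · rintro (rfl | rfl | h)
        · exact ⟨hix, by simp⟩
        · exact ⟨hxy.symm, by simp⟩
        · exact ⟨fun h' => hxH (h' ▸ h), by simp [h]⟩
      · tauto
    · ext c
      simp only [Finset.mem_insert, Finset.mem_erase]
      constructor
      · rintro (rfl | rfl | h)
        · exact ⟨hiy, by simp⟩
        · exact ⟨hxy, by simp⟩
        · exact ⟨fun h' => hyH (h' ▸ h), by simp [h]⟩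
      · tauto
  · exact Finset.one_lt_card.mpr ⟨x, by simp, y, by simp, hxy⟩

/-- The change of the elementary symmetric factor with index `v` under the transposition of the
positions `a+v` and `a+v+1`. -/
lemma esymmOn_sub_rename_swap {K : Type*} [Field K] {L : ℕ} (a b v m : ℕ) (x y : Fin L)
    (hx : (x : ℕ) = a + v) (hy : (y : ℕ) = a + v + 1) (hb : a + v + 1 < b) :
    (esymmOn (blockS L a b v) (m + 1) : MvPolynomial (Fin L) K)
        - rename (Equiv.swap x y) (esymmOn (blockS L a b v) (m + 1))
      = (X y - X x) * esymmOn (blockS L a b (v + 1)) m := by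
  have hxS : x ∉ blockS L a b (v + 1) := by simp [blockS]; omega
  have hyS : y ∉ blockS L a b (v + 1) := by simp [blockS]; omega
  have e1 : blockS L a b v = insert y (blockS L a b (v + 1)) := by
    ext c
    simp only [blockS, Finset.mem_filter, Finset.mem_univ, true_and, Finset.mem_insert,
      Fin.ext_iff]
    omega
  have hs : (blockS L a b (v + 1)).image (Equiv.swap x y) = blockS L a b (v + 1) := by
    apply image_eq_of_forall
    intro i hi
    rwa [Equiv.swap_apply_of_ne_of_ne (ne_of_mem_of_not_mem hi hxS)
      (ne_of_mem_of_not_mem hi hyS)]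
  rw [rename_esymmOn, e1, Finset.image_insert, hs, Equiv.swap_apply_right,
    esymmOn_insert _ _ hyS, esymmOn_insert _ _ hxS]
  ring

/-- Adjacent transpositions inside the block fix `blockP`. -/
lemma rename_swap_blockP {K : Type*} [Field K] {L : ℕ}
    (Q : Finset (Fin L) → MvPolynomial (Fin L) K)
    (hQ2 : ∀ I : Finset (Fin L), 2 ≤ I.card → ∀ a ∈ I, ∀ b ∈ I, a ≠ b →
      (X a - X b) * Q I = Q (I.erase a) - Q (I.erase b))
    (a b j v : ℕ) (x y : Fin L) (hx : (x : ℕ) = a + v) (hy : (y : ℕ) = a + v + 1)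
    (hb : a + v + 1 < b)
    (hE : ∀ I : Finset (Fin L), I.Nonempty →
      rename (Equiv.swap x y) (Q I) = Q (I.image (Equiv.swap x y))) :
    rename (Equiv.swap x y) (blockP Q a b j) = blockP Q a b j := by
  have hval : ∀ i : Fin L, ((i : ℕ) = a + v ∧ (Equiv.swap x y i : ℕ) = a + v + 1) ∨
      ((i : ℕ) = a + v + 1 ∧ (Equiv.swap x y i : ℕ) = a + v) ∨
      ((i : ℕ) ≠ a + v ∧ (i : ℕ) ≠ a + v + 1 ∧ (Equiv.swap x y i : ℕ) = i) := by
    intro i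
    rw [Equiv.swap_apply_def]
    split_ifs with h1 h2
    · left; rw [h1]; exact ⟨hx, hy⟩
    · right; left; rw [h2]; exact ⟨hy, hx⟩
    · right; right
      refine ⟨fun h => h1 (Fin.ext (h.trans hx.symm)), fun h => h2 (Fin.ext (h.trans hy.symm)), rfl⟩
  have hG : ∀ t, t ≠ v + 1 → rename (Equiv.swap x y) (blockG Q a t) = blockG Q a t := by
    intro t ht
    apply rename_blockG_of_stable Q _ hE
    · intro i _ _
      have := hval i
      omega
    · intro i _
      have := hval i
      omega
  have hS : ∀ t m, t ≠ v → rename (Equiv.swap x y)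
      (esymmOn (blockS L a b t) m : MvPolynomial (Fin L) K) = esymmOn (blockS L a b t) m := by
    intro t m ht
    rw [rename_esymmOn, image_eq_of_forall]
    intro i hi
    simp only [blockS, Finset.mem_filter, Finset.mem_univ, true_and] at hi ⊢
    have := hval i
    omega
  -- The sum may start at `t = 0`, where the term vanishes.
  have hP : blockP Q a b j =
      ∑ t ∈ Finset.range (j + 1), esymmOn (blockS L a b t) (j - t) * blockG Q a t := by
    unfold blockP
    apply Finset.sum_subset
    · intro t ht
      simp only [Finset.mem_Icc, Finset.mem_range] at ht ⊢
      omega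
    · intro t ht ht'
      simp only [Finset.mem_Icc, Finset.mem_range] at ht ht'
      have : t = 0 := by omega
      rw [this, blockG_zero, mul_zero]
  -- The changes of the terms telescope; `h` is supported at `t = v + 1` only.
  let h : ℕ → MvPolynomial (Fin L) K := fun t =>
    if t = v + 1 ∧ t ≤ j then
      (X x - X y) * esymmOn (blockS L a b (v + 1)) (j - (v + 1)) * blockG Q a v
    else 0
  symm
  rw [← sub_eq_zero, hP, map_sum, ← Finset.sum_sub_distrib]
  have key : ∀ t ∈ Finset.range (j + 1),
      esymmOn (blockS L a b t) (j - t) * blockG Q a t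
        - rename (Equiv.swap x y) (esymmOn (blockS L a b t) (j - t) * blockG Q a t)
      = h t - h (t + 1) := by
    intro t ht
    rw [Finset.mem_range] at ht
    rw [map_mul]
    by_cases h1 : t = v + 1
    · subst h1
      rw [hS _ _ (by omega), ← mul_sub, blockG_sub_rename_swap Q hQ2 a v x y hx hy hE]
      simp only [h]
      rw [if_pos ⟨trivial, by omega⟩, if_neg (by omega)]
      ring
    · rw [hG t h1]
      by_cases h2 : t = v
      · subst h2
        simp only [h]
        rw [if_neg (by omega)]
        by_cases h3 : t = j
        · subst h3
          rw [if_neg (by omega), Nat.sub_self, esymmOn_zero, map_one]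
          ring
        · rw [if_pos ⟨trivial, by omega⟩, ← sub_mul]
          have e : j - t = (j - (t + 1)) + 1 := by omega
          rw [e, esymmOn_sub_rename_swap a b t _ x y hx hy hb]
          ring
      · rw [hS _ _ h2]
        simp only [h]
        rw [if_neg (by omega), if_neg (by omega)]
        ring
  rw [Finset.sum_congr rfl key, Finset.sum_range_sub']
  simp [h]

/-- Let `Q` be equivariant under `σ` and under all permutations supported on the block
`[a, a+m+1)`. If `σ` preserves the block and the set of larger indices, it fixes `blockP`: up to a
permutation of the block, `σ` fixes the block pointwise. -/
lemma rename_blockP {K : Type*} [Field K] {L : ℕ}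
    (Q : Finset (Fin L) → MvPolynomial (Fin L) K)
    (hQ2 : ∀ I : Finset (Fin L), 2 ≤ I.card → ∀ a ∈ I, ∀ b ∈ I, a ≠ b →
      (X a - X b) * Q I = Q (I.erase a) - Q (I.erase b))
    (a m j : ℕ) (hL : a + (m + 1) ≤ L) (hj : j ≤ m + 1)
    (hE : ∀ σ : Equiv.Perm (Fin L),
      (∀ i : Fin L, (σ i = i) ∨ ((a ≤ (i : ℕ) ∧ (i : ℕ) < a + (m + 1)) ∧
        a ≤ ((σ i : Fin L) : ℕ) ∧ ((σ i : Fin L) : ℕ) < a + (m + 1))) →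
      ∀ I : Finset (Fin L), I.Nonempty → rename σ (Q I) = Q (I.image σ))
    (σ : Equiv.Perm (Fin L))
    (hEσ : ∀ I : Finset (Fin L), I.Nonempty → rename σ (Q I) = Q (I.image σ))
    (hσ1 : ∀ i : Fin L, a ≤ (i : ℕ) → (i : ℕ) < a + (m + 1) →
      a ≤ ((σ i : Fin L) : ℕ) ∧ ((σ i : Fin L) : ℕ) < a + (m + 1))
    (hσ2 : ∀ i : Fin L, a + (m + 1) ≤ (i : ℕ) → a + (m + 1) ≤ ((σ i : Fin L) : ℕ)) :
    rename σ (blockP Q a (a + (m + 1)) j) = blockP Q a (a + (m + 1)) j := by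
  let ι : Fin (m + 1) ↪ Fin L :=
    ⟨fun i => ⟨a + i, by omega⟩, fun i i' h => by
      simp only [Fin.mk.injEq] at h; exact Fin.ext (by omega)⟩
  have hιv : ∀ i, ((ι i : Fin L) : ℕ) = a + i := fun i => rfl
  have hrange : ∀ i : Fin L, i ∈ Set.range ι ↔ a ≤ (i : ℕ) ∧ (i : ℕ) < a + (m + 1) := by
    intro i
    constructor
    · rintro ⟨c, rfl⟩
      rw [hιv]; omega
    · intro h
      exact ⟨⟨i - a, by omega⟩, Fin.ext (by rw [hιv]; simp; omega)⟩
  let φ : Equiv.Perm (Fin (m + 1)) →* Equiv.Perm (Fin L) := Equiv.Perm.viaEmbeddingHom ι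
  have hφ1 : ∀ s i, φ s (ι i) = ι (s i) := fun s i => Equiv.Perm.viaEmbedding_apply s ι i
  have hφ2 : ∀ s i, i ∉ Set.range ι → φ s i = i :=
    fun s i hi => Equiv.Perm.viaEmbedding_apply_of_notMem s ι i hi
  have hφ3 : ∀ s i, (φ s i = i) ∨ ((a ≤ (i : ℕ) ∧ (i : ℕ) < a + (m + 1)) ∧
        a ≤ ((φ s i : Fin L) : ℕ) ∧ ((φ s i : Fin L) : ℕ) < a + (m + 1)) := by
    intro s i
    by_cases hi : i ∈ Set.range ι
    · right
      obtain ⟨c, rfl⟩ := hi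
      rw [hφ1]
      exact ⟨(hrange _).mp ⟨c, rfl⟩, (hrange _).mp ⟨_, rfl⟩⟩
    · exact Or.inl (hφ2 s i hi)
  -- Permutations supported on the block, via adjacent transpositions.
  have hblock : ∀ s : Equiv.Perm (Fin (m + 1)),
      rename (φ s) (blockP Q a (a + (m + 1)) j) = blockP Q a (a + (m + 1)) j := by
    intro s
    have hs : s ∈ Submonoid.closure
        (Set.range fun i : Fin m => Equiv.swap i.castSucc i.succ) := by
      rw [Equiv.Perm.mclosure_swap_castSucc_succ]; trivial
    induction hs using Submonoid.closure_induction with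
    | mem s hs =>
      obtain ⟨i, rfl⟩ := hs
      have hsw : φ (Equiv.swap i.castSucc i.succ) = Equiv.swap (ι i.castSucc) (ι i.succ) := by
        ext c
        by_cases hc : c ∈ Set.range ι
        · obtain ⟨c, rfl⟩ := hc
          rw [hφ1, ι.injective.map_swap]
        · rw [hφ2 _ _ hc, Equiv.swap_apply_of_ne_of_ne]
          · rintro rfl; exact hc ⟨_, rfl⟩
          · rintro rfl; exact hc ⟨_, rfl⟩
      have h3 := hE _ (hφ3 (Equiv.swap i.castSucc i.succ))
      simp only [hsw] at h3 ⊢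
      refine rename_swap_blockP Q hQ2 a _ j i _ _ ?_ ?_ ?_ h3
      · rw [hιv]; simp
      · rw [hιv]; simp; omega
      · omega
    | one => simp
    | mul s t _ _ hs ht =>
      rw [map_mul, Equiv.Perm.coe_mul, ← rename_rename, ht, hs]
  -- `σ` agrees on the block with `φ s`.
  obtain ⟨s, hs⟩ : ∃ s : Equiv.Perm (Fin (m + 1)), ∀ i, ι (s i) = σ (ι i) := by
    have hex : ∀ i, ∃ c, ι c = σ (ι i) := fun i =>
      (hrange _).mpr (hσ1 _ ((hrange _).mp ⟨i, rfl⟩).1 ((hrange _).mp ⟨i, rfl⟩).2)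
    choose f hf using hex
    have hinj : Function.Injective f := fun i i' h => by
      apply ι.injective
      apply σ.injective
      rw [← hf, ← hf, h]
    exact ⟨Equiv.ofBijective f (Finite.injective_iff_bijective.mp hinj), hf⟩
  let π : Equiv.Perm (Fin L) := φ s⁻¹ * σ
  have hπ : ∀ i, π i = φ s⁻¹ (σ i) := fun i => rfl
  have hσπ : (σ : Fin L → Fin L) = φ s ∘ π := by
    funext i
    rw [Function.comp, hπ, ← Equiv.Perm.mul_apply, ← map_mul]
    simp
  have hπE : ∀ I : Finset (Fin L), I.Nonempty → rename π (Q I) = Q (I.image π) := by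
    intro I hI
    have : (π : Fin L → Fin L) = φ s⁻¹ ∘ σ := rfl
    rw [this, ← rename_rename, hEσ I hI, hE _ (hφ3 _) _ (hI.image _), Finset.image_image]
  have hπ1 : ∀ i : Fin L, a ≤ (i : ℕ) → (i : ℕ) < a + (m + 1) → π i = i := by
    intro i h1 h2
    obtain ⟨c, rfl⟩ := (hrange i).mpr ⟨h1, h2⟩
    rw [hπ, ← hs, hφ1]
    simp
  have hπ2 : ∀ i : Fin L, a + (m + 1) ≤ (i : ℕ) → a + (m + 1) ≤ ((π i : Fin L) : ℕ) := by
    intro i hi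
    have h := hσ2 i hi
    rw [hπ, hφ2]
    · exact h
    · rw [hrange]; omega
  have hπP : rename π (blockP Q a (a + (m + 1)) j) = blockP Q a (a + (m + 1)) j := by
    unfold blockP
    rw [map_sum]
    refine Finset.sum_congr rfl fun t ht => ?_
    rw [Finset.mem_Icc] at ht
    rw [map_mul, rename_esymmOn, image_eq_of_forall, rename_blockG_of_stable Q π hπE]
    · intro i h1 h2
      rw [hπ1 i h1 (by omega)]
      exact ⟨h1, h2⟩
    · intro i h1
      by_cases h : (i : ℕ) < a + (m + 1)
      · rw [hπ1 i (by omega) h]; exact h1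
      · have := hπ2 i (by omega)
        omega
    · intro i hi
      simp only [blockS, Finset.mem_filter, Finset.mem_univ, true_and] at hi ⊢
      rw [hπ1 i (by omega) (by omega)]
      exact hi
  rw [hσπ, ← rename_rename, hπP, hblock]

lemma degLe_blockP {K : Type*} [Field K] {L : ℕ}
    (Q : Finset (Fin L) → MvPolynomial (Fin L) K)
    (hQ2 : ∀ I : Finset (Fin L), 2 ≤ I.card → ∀ a ∈ I, ∀ b ∈ I, a ≠ b →
      (X a - X b) * Q I = Q (I.erase a) - Q (I.erase b))
    (d : ℕ) (hd : ∀ i, (Q {i}).totalDegree ≤ d) (a b j : ℕ) (hL : a + j ≤ L) :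
    DegLe (blockP Q a b j) ((d : ℤ) - L + (a + j : ℕ)) := by
  refine DegLe.sum _ _ fun t ht => ?_
  rw [Finset.mem_Icc] at ht
  have hG : DegLe (blockG Q a t) ((d : ℤ) - (L - (a + t) : ℕ)) := by
    refine DegLe.sum _ _ fun i hi => ?_
    simp only [Finset.mem_filter, Finset.mem_univ, true_and] at hi
    apply degLe_dd Q hQ2 d hd
    rw [Finset.card_insert_of_notMem (by simp; omega)]
    congr 1
    have e : (Finset.univ.filter fun c : Fin L => a + t ≤ (c : ℕ))
        = (Finset.univ.filter fun c : Fin L => (c : ℕ) < a + t)ᶜ := by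
      ext c; simp
    rw [e, Finset.card_compl, Fintype.card_fin, Fin.card_filter_val_lt]
    congr 1
    omega
  have h := (degLe_esymmOn (K := K) (blockS L a b t) (j - t)).mul hG
  have e : ((j - t : ℕ) : ℤ) + ((d : ℤ) - (L - (a + t) : ℕ)) = (d : ℤ) - L + (a + j : ℕ) := by
    omega
  rwa [e] at h

/-! ### Blocks of the partition -/

namespace PartitionOf

variable {n : ℕ} (lam : PartitionOf n)

lemma tau_zero : lam.tau 0 = 0 := by simp [tau]

lemma tau_mono_s9 {k k' : ℕ} (h : k ≤ k') : lam.tau k ≤ lam.tau k' := by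
  unfold tau
  apply Finset.sum_le_sum_of_subset
  intro i hi
  simp only [Finset.mem_filter, Finset.mem_univ, true_and] at hi ⊢
  omega

lemma tau_succ_s9 (k : ℕ) (hk : k < lam.r) : lam.tau (k + 1) = lam.tau k + lam.mult ⟨k, hk⟩ := by
  unfold tau
  have e : Finset.univ.filter (fun j : Fin lam.r => (j : ℕ) < k + 1)
      = insert ⟨k, hk⟩ (Finset.univ.filter (fun j : Fin lam.r => (j : ℕ) < k)) := by
    ext c
    simp only [Finset.mem_filter, Finset.mem_univ, true_and, Finset.mem_insert, Fin.ext_iff]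
    omega
  rw [e, Finset.sum_insert (by simp), add_comm]

lemma tau_r : lam.tau lam.r = lam.length := by
  simp [tau, length]

lemma tau_le_length {k : ℕ} (hk : k ≤ lam.r) : lam.tau k ≤ lam.length :=
  lam.tau_r ▸ lam.tau_mono_s9 hk

lemma exists_block (i : ℕ) (hi : i < lam.length) :
    ∃ k, k < lam.r ∧ lam.tau k ≤ i ∧ i < lam.tau (k + 1) := by
  rw [← tau_r] at hi
  generalize lam.r = r at hi ⊢
  induction r with
  | zero => rw [tau_zero] at hi; omega
  | succ r ih =>
    by_cases h : i < lam.tau r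
    · obtain ⟨k, h1, h2⟩ := ih h
      exact ⟨k, by omega, h2⟩
    · exact ⟨r, by omega, by omega, hi⟩

lemma InSlambda.tau_le {lam : PartitionOf n} {σ : Equiv.Perm (Fin lam.length)}
    (hσ : lam.InSlambda σ) (k : ℕ) (i : Fin lam.length) (hi : lam.tau k ≤ (i : ℕ)) :
    lam.tau k ≤ ((σ i : Fin lam.length) : ℕ) := by
  obtain ⟨k', h1, h2, h3⟩ := lam.exists_block i i.2
  have hkk : k ≤ k' := by
    by_contra h
    have := lam.tau_mono_s9 (show k' + 1 ≤ k by omega)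
    omega
  exact (lam.tau_mono_s9 hkk).trans (hσ k' h1 i h2 h3).1

lemma inSlambda_of_support (k : ℕ) (σ : Equiv.Perm (Fin lam.length))
    (h : ∀ i, σ i = i ∨ ((lam.tau k ≤ (i : ℕ) ∧ (i : ℕ) < lam.tau (k + 1)) ∧
      lam.tau k ≤ ((σ i : Fin lam.length) : ℕ) ∧
        ((σ i : Fin lam.length) : ℕ) < lam.tau (k + 1))) :
    lam.InSlambda σ := by
  intro k' _ i h1 h2
  rcases h i with h | ⟨h3, h4⟩
  · rw [h]; exact ⟨h1, h2⟩
  · have hkk : k' = k := by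
      rcases lt_trichotomy k' k with h | h | h
      · have := lam.tau_mono_s9 (show k' + 1 ≤ k by omega)
        omega
      · exact h
      · have := lam.tau_mono_s9 (show k + 1 ≤ k' by omega)
        omega
    rw [hkk]; exact h4

end PartitionOf

/-- Both branches of `symP` are given by the same formula: in the case `j = ℓ_{k+1}` every term
but the last has an elementary symmetric factor of degree exceeding its number of variables. -/
lemma symP_eq_blockP {K : Type*} [Field K] {n : ℕ} (lam : PartitionOf n)
    (Q : Finset (Fin lam.length) → MvPolynomial (Fin lam.length) K)
    (k : ℕ) (hk : k < lam.r) (j : ℕ) (hj1 : 1 ≤ j) :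
    symP lam Q k hk j = blockP Q (lam.tau k) (lam.tau (k + 1)) j := by
  unfold symP
  split_ifs with h
  · have ht := lam.tau_succ_s9 k hk
    rw [← h] at ht
    unfold blockP
    rw [Finset.sum_eq_single_of_mem j (by simp [hj1])]
    · rw [Nat.sub_self, esymmOn_zero, one_mul, blockG, ht]
    · intro t htj hne
      rw [Finset.mem_Icc] at htj
      have hcard : (blockS lam.length (lam.tau k) (lam.tau (k + 1)) t).card < j - t := by
        have hsub : (blockS lam.length (lam.tau k) (lam.tau (k + 1)) t).card
            ≤ (Finset.Ico (lam.tau k + t + 1) (lam.tau (k + 1))).card := by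
          apply Finset.card_le_card_of_injOn (fun i : Fin lam.length => (i : ℕ))
          · intro i hi
            simpa [blockS] using hi
          · intro i _ i' _ h
            exact Fin.ext h
        rw [Nat.card_Ico] at hsub
        omega
      rw [esymmOn, Finset.powersetCard_eq_empty.mpr hcard, Finset.sum_empty, zero_mul]
  · rfl

/-- Properties of the symmetrized sequence `p`: (1) each `p_{τ_k+j}` is `S_λ`-invariant;
(2) if `deg q_i ≤ d` for all `i` then `deg p_{τ_k+j} ≤ d − ℓ + (τ_k+j)` (with `deg 0 = −∞`);
(3) if `ℓ ≥ d + 2` then `p` vanishes at all (1-based) positions `τ_k + j ≤ ℓ − d − 1`. -/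
theorem stmt9 {K : Type*} [Field K] {n : ℕ} (lam : PartitionOf n)
    (q : Fin lam.length → MvPolynomial (Fin lam.length) K)
    (hequi : ∀ σ : Equiv.Perm (Fin lam.length), lam.InSlambda σ →
      ∀ i, MvPolynomial.rename σ (q i) = q (σ i))
    (hdvd : ∀ i j : Fin lam.length, i ≠ j →
      (MvPolynomial.X i - MvPolynomial.X j) ∣ (q i - q j))
    (Q : Finset (Fin lam.length) → MvPolynomial (Fin lam.length) K)
    (hQ1 : ∀ i : Fin lam.length, Q {i} = q i)
    (hQ2 : ∀ I : Finset (Fin lam.length), 2 ≤ I.card → ∀ a ∈ I, ∀ b ∈ I, a ≠ b →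
      (MvPolynomial.X a - MvPolynomial.X b) * Q I = Q (I.erase a) - Q (I.erase b))
    (k : ℕ) (hk : k < lam.r) (j : ℕ) (hj1 : 1 ≤ j) (hj2 : j ≤ lam.mult ⟨k, hk⟩) :
    (∀ σ : Equiv.Perm (Fin lam.length), lam.InSlambda σ →
        MvPolynomial.rename σ (symP lam Q k hk j) = symP lam Q k hk j) ∧
      ∀ d : ℕ, (∀ i, (q i).totalDegree ≤ d) →
        (symP lam Q k hk j = 0 ∨
          ((symP lam Q k hk j).totalDegree : ℤ) ≤
            (d : ℤ) - (lam.length : ℤ) + (lam.tau k + j : ℕ)) ∧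
        (d + 2 ≤ lam.length → lam.tau k + j ≤ lam.length - d - 1 →
          symP lam Q k hk j = 0) := by
  rw [symP_eq_blockP lam Q k hk j hj1]
  have hts := lam.tau_succ_s9 k hk
  have htl := lam.tau_le_length (show k + 1 ≤ lam.r from hk)
  refine ⟨fun σ hσ => ?_, fun d hd => ?_⟩
  · have hE : ∀ σ : Equiv.Perm (Fin lam.length), lam.InSlambda σ →
        ∀ I : Finset (Fin lam.length), I.Nonempty → rename σ (Q I) = Q (I.image σ) := by
      intro σ hσ I hI
      have hc := hI.card_pos
      exact rename_dd Q hQ2 σ (fun i => by rw [hQ1, hQ1, hequi σ hσ]) (I.card - 1) I (by omega)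
    obtain ⟨m, hm⟩ : ∃ m, lam.mult ⟨k, hk⟩ = m + 1 := ⟨_, (Nat.succ_pred_eq_of_pos
      (lam.mult_pos ⟨k, hk⟩)).symm⟩
    rw [hm] at hts
    have hsupp := fun τ h => hE τ (lam.inSlambda_of_support k τ h)
    have hσ1 := hσ k hk
    have hσ2 := hσ.tau_le (k + 1)
    rw [hts] at htl hsupp hσ1 hσ2 ⊢
    exact rename_blockP Q hQ2 _ m j htl (by omega) hsupp σ (hE σ hσ) hσ1 hσ2
  · have hdeg := degLe_blockP Q hQ2 d (fun i => by rw [hQ1]; exact hd i) (lam.tau k)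
      (lam.tau (k + 1)) j (by omega)
    refine ⟨hdeg, fun h1 h2 => ?_⟩
    rcases hdeg with h | h
    · exact h
    · omega
end

section
/- Let K be a field, f_1,…,f_s and φ symmetric polynomials in K[x_1,…,x_n] with s < n, and λ a partition of n of length ℓ. Then for every ζ ∈ K^ℓ: (a) the Jacobian matrix Jac(f,φ) evaluated at ι_λ(ζ) ∈ K^n has the same rank as the matrix G^{[λ]} evaluated at ζ; (b) consequently, ι_λ(ζ) belongs to W(φ,f) if and only if (T_λ f_i)(ζ) = 0 for i = 1,…,s and the rank of G^{[λ]} evaluated at ζ is at most s. -/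
open MvPolynomial

/-- If two coordinates of a point agree, the corresponding partial derivatives of a symmetric
polynomial agree there. -/
lemma eval_pderiv_eq_of_isSymmetric {K σ : Type*} [CommRing K] [DecidableEq σ]
    {p : MvPolynomial σ K} (hp : p.IsSymmetric) {x : σ → K} {i j : σ} (hij : x i = x j) :
    eval x (pderiv i p) = eval x (pderiv j p) := by
  have hx : x ∘ Equiv.swap i j = x := by
    funext k
    rcases eq_or_ne k i with rfl | hi
    · simp [hij]
    rcases eq_or_ne k j with rfl | hj
    · simp [hij]
    · simp [Equiv.swap_apply_of_ne_of_ne hi hj]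
  have h := pderiv_rename (R := K) (Equiv.swap i j).injective i p
  rw [hp, Equiv.swap_apply_left] at h
  rw [h, eval_rename, hx]

/-- Repeating columns of a matrix, each at least once, does not change its rank. -/
lemma rank_eq_of_columns {K m n l : Type*} [Field K] [Fintype m] [Fintype n] [Fintype l]
    (A : Matrix m n K) (B : Matrix m l K) {ψ : n → l} (hψ : Function.Surjective ψ)
    (h : ∀ i j, A i j = B i (ψ j)) : A.rank = B.rank := by
  have hAB : A.col = B.col ∘ ψ := by
    funext j i
    exact h i j
  rw [Matrix.rank_eq_finrank_span_cols, Matrix.rank_eq_finrank_span_cols, hAB,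
    hψ.range_comp]

/-- For symmetric `f_1,…,f_s, φ` and a partition `λ` of `n` of length `ℓ`, with `T_λ = rename ψ`
(for `ψ` the monotone map duplicating variables according to `λ`) and `ι_λ(ζ) = ζ ∘ ψ`:
(a) the Jacobian `Jac(f,φ)` evaluated at `ι_λ(ζ)` has the same rank as the matrix `G^{[λ]}`
evaluated at `ζ`; (b) `ι_λ(ζ) ∈ W(φ,f)` iff `(T_λ f_i)(ζ) = 0` for all `i` and the rank of
`G^{[λ]}` at `ζ` is at most `s`. -/
theorem stmt11 {K : Type*} [Field K] {n s : ℕ} (hs : s < n)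
    (f : Fin s → MvPolynomial (Fin n) K) (φ : MvPolynomial (Fin n) K)
    (hf : ∀ i, (f i).IsSymmetric) (hφ : φ.IsSymmetric)
    (lam : PartitionOf n) (ψ : Fin n → Fin lam.length)
    (hmono : Monotone ψ)
    (hfib : ∀ (k : ℕ) (hk : k < lam.r), ∀ c : Fin lam.length,
      lam.tau k ≤ (c : ℕ) → (c : ℕ) < lam.tau (k + 1) →
        (Finset.univ.filter fun x : Fin n => ψ x = c).card = lam.parts ⟨k, hk⟩)
    (u : Fin lam.length → Fin n) (hu : ∀ c, ψ (u c) = c)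
    (ζ : Fin lam.length → K) :
    (Matrix.of fun (i : Fin (s + 1)) (j : Fin n) =>
        eval (ζ ∘ ψ)
          (pderiv j ((Fin.snoc f φ : Fin (s + 1) → MvPolynomial (Fin n) K) i))).rank =
      (Matrix.of fun (i : Fin (s + 1)) (c : Fin lam.length) =>
        eval ζ (rename ψ
          (pderiv (u c) ((Fin.snoc f φ : Fin (s + 1) → MvPolynomial (Fin n) K) i)))).rank ∧
    (((∀ i, eval (ζ ∘ ψ) (f i) = 0) ∧
        (Matrix.of fun (i : Fin (s + 1)) (j : Fin n) =>
          eval (ζ ∘ ψ)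
            (pderiv j ((Fin.snoc f φ : Fin (s + 1) → MvPolynomial (Fin n) K) i))).rank ≤ s) ↔
      ((∀ i, eval ζ (rename ψ (f i)) = 0) ∧
        (Matrix.of fun (i : Fin (s + 1)) (c : Fin lam.length) =>
          eval ζ (rename ψ
            (pderiv (u c)
              ((Fin.snoc f φ : Fin (s + 1) → MvPolynomial (Fin n) K) i)))).rank ≤ s)) := by
  have hsym : ∀ i, ((Fin.snoc f φ : Fin (s + 1) → MvPolynomial (Fin n) K) i).IsSymmetric := by
    intro i
    refine Fin.lastCases ?_ (fun k => ?_) i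
    · simpa using hφ
    · simpa using hf k
  have hrank := rank_eq_of_columns
    (Matrix.of fun (i : Fin (s + 1)) (j : Fin n) => eval (ζ ∘ ψ)
      (pderiv j ((Fin.snoc f φ : Fin (s + 1) → MvPolynomial (Fin n) K) i)))
    (Matrix.of fun (i : Fin (s + 1)) (c : Fin lam.length) => eval ζ (rename ψ
      (pderiv (u c) ((Fin.snoc f φ : Fin (s + 1) → MvPolynomial (Fin n) K) i))))
    (ψ := ψ) (fun c => ⟨u c, hu c⟩) (fun i j => by
      simp only [Matrix.of_apply, eval_rename]
      exact eval_pderiv_eq_of_isSymmetric (hsym i) (by simp [hu]))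
  refine ⟨hrank, ?_⟩
  rw [hrank]
  simp only [eval_rename]
end

section
/- Let K be an algebraically closed field and let m, p, q, τ be nonnegative integers with p ≤ q and m > q − p + τ + 1. Let G be a p×q matrix with entries in K[y_1,…,y_m] and let f_1,…,f_τ ∈ K[y_1,…,y_m]. Let V ⊆ K^m be the set of common zeros of f_1,…,f_τ and of all p×p minors of G. Then V has no isolated points: for every x ∈ V and every polynomial h ∈ K[y_1,…,y_m] with h(x) ≠ 0, there exists y ∈ V with y ≠ x and h(y) ≠ 0 (equivalently, no singleton {x} is open in V for the Zariski topology). -/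
/-!
Let `M` be the maximal ideal of the point `x` and `I` the ideal generated by the `f i` and the
maximal minors of `G`. The theorem reduces to the Eagon–Northcott height bound: a prime minimal
over `I` has height at most `q - p + 1 + τ`. Since `M` has height `m`, it is not minimal over `I`,
so there is a prime `Q` with `I ≤ Q < M`; picking `g ∈ M \ Q`, the Nullstellensatz gives a zero `y`
of `Q` where `g * h` does not vanish, and this `y` is the required point.

The maximal minors of `G` all lie in a prime `Q` if and only if the rows of `G` are linearly
dependent modulo `Q` (`rowDep_iff_det_mem`), so the height bound (`height_le_of_minimal`) can be
proved for minimal primes `P` of the locus where the rows are dependent, by induction on the number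
of rows. One row is Krull's height theorem.

* If some entry of `G` is outside `P`, it can be used as a pivot (`rowDep_pivot`), which removes
  one row and one column.
* If all entries lie in `P` and there are at least two rows, pass to `A[X]` and add `X` to one
  entry of `G`. The rows of the new matrix are dependent modulo `P A[X]`, and `P A[X]` is minimal
  with this property: for a smaller such prime `Q'`, the prime `(P, X)` would be minimal over
  `Q' + (X)`, which the strict chain `Q' < P A[X] < (P, X)` forbids by Krull's principal ideal
  theorem. Modulo `P A[X]` the new matrix has a nonzero entry, so the pivot case applies, and
  `ht P ≤ ht P A[X]`.
-/

/-- The rows of the matrix `G` are linearly dependent modulo the ideal `Q`. -/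
def RowDep {A : Type*} [CommRing A] {p q : ℕ} (G : Matrix (Fin p) (Fin q) A) (Q : Ideal A) : Prop :=
  ∃ v : Fin p → A, (∃ i, v i ∉ Q) ∧ ∀ j, ∑ i, v i * G i j ∈ Q

theorem exists_det_ne_zero_of_linearIndependent_row {L : Type*} [Field L] {p q : ℕ}
    (M : Matrix (Fin p) (Fin q) L) (hM : LinearIndependent L M.row) :
    ∃ c : Fin p → Fin q, Function.Injective c ∧ (M.submatrix id c).det ≠ 0 := by
  obtain ⟨κ, a, ha, hsp, hli⟩ := exists_linearIndependent' L M.col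
  have : Finite κ := Finite.of_injective a ha
  have : Fintype κ := Fintype.ofFinite κ
  have hcard : Fintype.card κ = p := by
    have h1 := finrank_span_eq_card hli
    rw [hsp, ← Matrix.rank_eq_finrank_span_cols, hM.rank_matrix, Fintype.card_fin] at h1
    exact h1.symm
  let e : Fin p ≃ κ := (Fintype.equivFinOfCardEq hcard).symm
  refine ⟨a ∘ e, ha.comp e.injective, ?_⟩
  have h2 : LinearIndependent L (M.submatrix id (a ∘ e)).col := hli.comp e e.injective
  rw [Matrix.linearIndependent_cols_iff_isUnit, Matrix.isUnit_iff_isUnit_det] at h2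
  exact h2.ne_zero

/-- All maximal minors lie in a prime `Q` exactly when the rows are dependent modulo `Q`. -/
theorem rowDep_iff_det_mem {A : Type*} [CommRing A] {p q : ℕ} (G : Matrix (Fin p) (Fin q) A)
    (Q : Ideal A) [Q.IsPrime] :
    RowDep G Q ↔ ∀ c : Fin p → Fin q, Function.Injective c → (G.submatrix id c).det ∈ Q := by
  constructor
  · rintro ⟨v, ⟨i, hi⟩, hv⟩ c -
    rw [← Ideal.Quotient.eq_zero_iff_mem, RingHom.map_det, ← Matrix.exists_vecMul_eq_zero_iff]
    refine ⟨fun i => Ideal.Quotient.mk Q (v i), fun h0 => hi ?_, ?_⟩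
    · rw [← Ideal.Quotient.eq_zero_iff_mem]
      exact congrFun h0 i
    · ext j
      have := hv (c j)
      rw [← Ideal.Quotient.eq_zero_iff_mem] at this
      simpa [Matrix.vecMul, dotProduct] using this
  · intro hdet
    by_contra hG
    let R := A ⧸ Q
    let L := FractionRing R
    let φ : A →+* L := (algebraMap R L).comp (Ideal.Quotient.mk Q)
    have hφ : ∀ a, φ a = 0 ↔ a ∈ Q := fun a => by
      rw [← Ideal.Quotient.eq_zero_iff_mem]
      exact (injective_iff_map_eq_zero' (algebraMap R L)).1 (IsFractionRing.injective R L) _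
    have hli : LinearIndependent L (G.map φ).row := by
      rw [Fintype.linearIndependent_iff]
      intro g hg
      by_contra! hne
      obtain ⟨i, hi⟩ := hne
      -- clear the denominators of `g`, then lift to `A`
      obtain ⟨b, hb⟩ := IsLocalization.exist_integer_multiples_of_finite (nonZeroDivisors R) g
      have hb' : ∀ i, ∃ a : A, φ a = algebraMap R L b * g i := fun i => by
        obtain ⟨r, hr⟩ := hb i
        obtain ⟨a, rfl⟩ := Ideal.Quotient.mk_surjective r
        exact ⟨a, by simpa [Algebra.smul_def, φ] using hr⟩
      choose v hv using hb'
      have hb0 : algebraMap R L b ≠ 0 :=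
        IsFractionRing.to_map_ne_zero_of_mem_nonZeroDivisors b.2
      refine hG ⟨v, ⟨i, ?_⟩, fun j => ?_⟩
      · rw [← hφ, hv]
        exact mul_ne_zero hb0 hi
      · rw [← hφ, map_sum]
        have := congrFun hg j
        simp only [Finset.sum_apply, Pi.smul_apply, smul_eq_mul, Matrix.row, Matrix.map_apply,
          Pi.zero_apply] at this
        simp only [map_mul, hv, mul_assoc]
        rw [← Finset.mul_sum, this, mul_zero]
    obtain ⟨c, hc, hne⟩ := exists_det_ne_zero_of_linearIndependent_row _ hli
    apply hne
    have := (hφ _).2 (hdet c hc)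
    rw [RingHom.map_det] at this
    simpa [Matrix.submatrix_map] using this

theorem RowDep.mono {A : Type*} [CommRing A] {p q : ℕ} {G : Matrix (Fin p) (Fin q) A}
    {Q Q' : Ideal A} [Q.IsPrime] [Q'.IsPrime] (h : Q ≤ Q') (hG : RowDep G Q) : RowDep G Q' :=
  (rowDep_iff_det_mem G Q').2 fun c hc => h ((rowDep_iff_det_mem G Q).1 hG c hc)

/-- One step of fraction-free Gaussian elimination with pivot `G a b`, deleting the row `a` and the
column `b`. -/
def pivotMatrix {A : Type*} [CommRing A] {p q : ℕ} (G : Matrix (Fin (p + 1)) (Fin (q + 1)) A)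
    (a : Fin (p + 1)) (b : Fin (q + 1)) : Matrix (Fin p) (Fin q) A :=
  fun i j => G a b * G (a.succAbove i) (b.succAbove j) - G (a.succAbove i) b * G a (b.succAbove j)

theorem rowDep_pivot {A : Type*} [CommRing A] {p q : ℕ} (G : Matrix (Fin (p + 1)) (Fin (q + 1)) A)
    (a : Fin (p + 1)) (b : Fin (q + 1)) (Q : Ideal A) [hQ : Q.IsPrime] (hab : G a b ∉ Q) :
    RowDep G Q ↔ RowDep (pivotMatrix G a b) Q := by
  have key : ∀ (w : Fin p → A) (j : Fin q), ∑ i, w i * pivotMatrix G a b i j =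
      G a b * ∑ i, w i * G (a.succAbove i) (b.succAbove j) -
        (∑ i, w i * G (a.succAbove i) b) * G a (b.succAbove j) := fun w j => by
    rw [Finset.mul_sum, Finset.sum_mul, ← Finset.sum_sub_distrib]
    exact Finset.sum_congr rfl fun i _ => by simp only [pivotMatrix]; ring
  constructor
  · rintro ⟨v, hv, hs⟩
    simp only [Fin.sum_univ_succAbove _ a] at hs
    refine ⟨fun i => v (a.succAbove i), ?_, fun j => ?_⟩
    · by_contra! hall
      have h1 : v a * G a b ∈ Q :=
        (Ideal.add_mem_iff_left Q (Q.sum_mem fun i _ => Q.mul_mem_right _ (hall i))).1 (hs b)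
      have h2 : v a ∈ Q := (hQ.mem_or_mem h1).resolve_right hab
      obtain ⟨i, hi⟩ := hv
      obtain rfl | ⟨k, rfl⟩ := Fin.eq_self_or_eq_succAbove a i
      · exact hi h2
      · exact hi (hall k)
    · rw [key]
      convert Q.sub_mem (Q.mul_mem_left (G a b) (hs (b.succAbove j)))
        (Q.mul_mem_right (G a (b.succAbove j)) (hs b)) using 1
      ring
  · rintro ⟨w, ⟨i, hi⟩, hs⟩
    refine ⟨a.insertNth (-∑ i, w i * G (a.succAbove i) b) (fun i => G a b * w i),
      ⟨a.succAbove i, ?_⟩, fun j => ?_⟩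
    · rw [Fin.insertNth_apply_succAbove]
      exact fun h => (hQ.mem_or_mem h).elim hab hi
    · simp only [Fin.sum_univ_succAbove _ a, Fin.insertNth_apply_same,
        Fin.insertNth_apply_succAbove, mul_assoc, ← Finset.mul_sum]
      obtain rfl | ⟨k, rfl⟩ := Fin.eq_self_or_eq_succAbove b j
      · convert Q.zero_mem using 1
        ring
      · convert hs k using 1
        rw [key]
        ring

open Polynomial in
theorem height_le_height_map_C {A : Type*} [CommRing A] (P : Ideal A) [hP : P.IsPrime] :
    P.height ≤ (P.map (C : A →+* A[X])).height := by
  let F : PrimeSpectrum A → PrimeSpectrum A[X] := fun I =>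
    ⟨I.asIdeal.map C, Ideal.isPrime_map_C_of_isPrime⟩
  have hle : ∀ I J : PrimeSpectrum A, F I ≤ F J → I ≤ J := fun I J h a ha => by
    have : C a ∈ J.asIdeal.map (C : A →+* A[X]) := h (Ideal.mem_map_of_mem C ha)
    simpa using Ideal.mem_map_C_iff.1 this 0
  have hF : StrictMono F := fun I J h =>
    lt_of_le_not_ge (Ideal.map_mono h.le : I.asIdeal.map C ≤ J.asIdeal.map C)
      fun h' => h.not_ge (hle _ _ h')
  have := Order.height_le_height_apply_of_strictMono F hF ⟨P, hP⟩
  rwa [← PrimeSpectrum.height_eq_orderHeight, ← PrimeSpectrum.height_eq_orderHeight] at this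

open Polynomial in
/-- Adding `X` to the entry `(0, 0)` of `G` changes nothing modulo an ideal containing `X`: the
constant coefficients of a dependence of the deformed rows give one of the rows of `G`. -/
theorem rowDep_comap_of_X_mem {A : Type*} [CommRing A] {p q : ℕ}
    (G : Matrix (Fin (p + 1)) (Fin (q + 1)) A) (N : Ideal A[X]) (hX : (X : A[X]) ∈ N)
    (hN : RowDep (G.map C + Matrix.single 0 0 X) N) : RowDep G (N.comap C) := by
  obtain ⟨v, ⟨i, hi⟩, hv⟩ := hN
  have hcoeff : ∀ f : A[X], f ∈ N ↔ C (f.coeff 0) ∈ N := fun f => by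
    conv_lhs => rw [← X_mul_divX_add f]
    exact Ideal.add_mem_iff_right N (N.mul_mem_right _ hX)
  refine ⟨fun i => (v i).coeff 0, ⟨i, fun h => hi ((hcoeff _).2 h)⟩, fun j => ?_⟩
  have := (hcoeff _).1 (hv j)
  rw [finsetSum_coeff] at this
  rw [Ideal.mem_comap]
  convert this using 3 with i
  rw [mul_coeff_zero]
  by_cases h : 0 = i ∧ 0 = j <;> simp [Matrix.single, h]

open Polynomial in
/-- The Eagon–Northcott bound: if `P` is minimal among the primes that contain the `τ` elements `f`
and modulo which the rows of the `(n + 1) × (k + n + 1)` matrix `G` are dependent, then `P` has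
height at most `k + 1 + τ`. -/
theorem height_le_of_minimal (n k τ : ℕ) : ∀ {A : Type*} [CommRing A] [IsNoetherianRing A]
    (G : Matrix (Fin (n + 1)) (Fin (k + n + 1)) A) (f : Fin τ → A) (P : Ideal A) [P.IsPrime],
    (∀ i, f i ∈ P) → RowDep G P →
    (∀ Q : Ideal A, Q.IsPrime → Q ≤ P → (∀ i, f i ∈ Q) → RowDep G Q → P ≤ Q) →
    P.height ≤ (k + 1 + τ : ℕ) := by
  induction n with
  | zero =>
    intro A _ _ G f P hP hf hG hmin
    have hrow : ∀ Q : Ideal A, Q.IsPrime → (RowDep G Q ↔ ∀ j, G 0 j ∈ Q) := by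
      intro Q hQ
      constructor
      · rintro ⟨v, ⟨i, hi⟩, hv⟩ j
        rw [show i = 0 by omega] at hi
        exact (hQ.mem_or_mem (by simpa using hv j)).resolve_left hi
      · intro h
        exact ⟨fun _ => 1, ⟨0, (Ideal.ne_top_iff_one Q).1 hQ.ne_top⟩, fun j => by simpa using h j⟩
    classical
    let s : Finset A := Finset.univ.image (G 0) ∪ Finset.univ.image f
    have hs : ∀ Q : Ideal A, Ideal.span (s : Set A) ≤ Q ↔ (∀ j, G 0 j ∈ Q) ∧ ∀ i, f i ∈ Q := by
      intro Q
      rw [Ideal.span_le]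
      simp [s, Set.range_subset_iff]
    have hPs : P ∈ (Ideal.span (s : Set A)).minimalPrimes :=
      ⟨⟨hP, (hs P).2 ⟨(hrow P hP).1 hG, hf⟩⟩, fun Q hQ hQP =>
        hmin Q hQ.1 hQP ((hs Q).1 hQ.2).2 ((hrow Q hQ.1).2 ((hs Q).1 hQ.2).1)⟩
    refine (Ideal.height_le_card_of_mem_minimalPrimes_span_finset hPs).trans ?_
    norm_cast
    refine (Finset.card_union_le _ _).trans (add_le_add ?_ ?_)
    · exact Finset.card_image_le.trans (by simp)
    · exact Finset.card_image_le.trans (by simp)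
  | succ n ih =>
    have pivot : ∀ {A : Type _} [CommRing A] [IsNoetherianRing A]
        (G : Matrix (Fin (n + 1 + 1)) (Fin (k + (n + 1) + 1)) A) (f : Fin τ → A) (P : Ideal A)
        [P.IsPrime], (∀ i, f i ∈ P) → RowDep G P →
        (∀ Q : Ideal A, Q.IsPrime → Q ≤ P → (∀ i, f i ∈ Q) → RowDep G Q → P ≤ Q) →
        (∃ a b, G a b ∉ P) → P.height ≤ (k + 1 + τ : ℕ) := by
      intro A _ _ G f P hP hf hG hmin ⟨a, b, hab⟩
      refine ih (pivotMatrix G a b) f P hf ((rowDep_pivot G a b P hab).1 hG) ?_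
      intro Q hQ hQP hfQ hGQ
      exact hmin Q hQ hQP hfQ ((rowDep_pivot G a b Q fun h => hab (hQP h)).2 hGQ)
    intro A _ _ G f P hP hf hG hmin
    by_cases hall : ∃ a b, G a b ∉ P
    · exact pivot G f P hf hG hmin hall
    push Not at hall
    refine (height_le_height_map_C P).trans ?_
    have hPB : (P.map (C : A →+* A[X])).IsPrime := Ideal.isPrime_map_C_of_isPrime
    have hX : (X : A[X]) ∉ P.map (C : A →+* A[X]) := fun h => by
      have := Ideal.mem_map_C_iff.1 h 1
      rw [coeff_X_one] at this
      exact hP.ne_top ((Ideal.eq_top_iff_one P).2 this)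
    refine pivot (G.map C + Matrix.single 0 0 X) (fun i => C (f i)) (P.map C)
      (fun i => Ideal.mem_map_of_mem C (hf i)) ?_ ?_ ⟨0, 0, ?_⟩
    · -- the row of index `1` vanishes modulo `P A[X]`
      refine ⟨Pi.single 1 1, ⟨1, ?_⟩, fun j => ?_⟩
      · rw [Pi.single_eq_same]
        exact (Ideal.ne_top_iff_one _).1 hPB.ne_top
      · rw [Finset.sum_eq_single 1 (fun i _ hi => by simp [hi]) (by simp)]
        simpa [Matrix.single] using Ideal.mem_map_of_mem C (hall 1 j)
    · intro Q hQ hQP hfQ hGQ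
      -- `N` is the prime ideal `(P, X)`
      let N : Ideal A[X] := P.comap constantCoeff
      have hN : N.IsPrime := Ideal.IsPrime.comap _
      have hPN : P.map C ≤ N := Ideal.map_le_iff_le_comap.2 fun a ha => by simpa [N] using ha
      have hXN : (X : A[X]) ∈ N := by simp [N]
      have hPN' : P.map C < N := lt_of_le_not_ge hPN fun h => hX (h hXN)
      have hNmin : N ∈ (Ideal.span (insert (X : A[X]) (Q : Set A[X]))).minimalPrimes := by
        refine ⟨⟨hN, Ideal.span_le.2 (Set.insert_subset hXN (hQP.trans hPN))⟩, ?_⟩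
        rintro N' ⟨hN', hle⟩ hN'N
        have hXN' : X ∈ N' := hle (Ideal.subset_span (Set.mem_insert _ _))
        have hQN' : Q ≤ N' := fun a ha => hle (Ideal.subset_span (Set.mem_insert_of_mem _ ha))
        have hPN'' : P ≤ N'.comap C := hmin (N'.comap C) (Ideal.IsPrime.comap _)
          (fun a ha => by simpa [N] using hN'N ha) (fun i => hQN' (hfQ i))
          (rowDep_comap_of_X_mem G N' hXN' (hGQ.mono hQN'))
        intro g hg
        rw [← X_mul_divX_add g]
        exact N'.add_mem (N'.mul_mem_right _ hXN') (hPN'' hg)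
      have := Ideal.mem_minimalPrimes_span_of_mem_minimalPrimes_span_insert hPN' X _ hNmin
        (Q : Set A[X]) hQP fun a ha =>
          Ideal.le_radical (Ideal.subset_span (Set.mem_insert_of_mem _ ha))
      rw [Ideal.span_eq] at this
      exact this.2 ⟨hQ, le_rfl⟩ hQP
    · intro h
      apply hX
      have h0 := Ideal.mem_map_of_mem C (hall 0 0)
      simpa using (Ideal.add_mem_iff_right _ h0).1 (by simpa using h)

open MvPolynomial in
/-- The chain of kernels of the partial evaluations `X j ↦ x j` for `j < i` shows that the maximal
ideal of a point of affine `m`-space has height at least `m`. -/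
theorem le_height_vanishingIdeal {K : Type*} [Field K] {m : ℕ} (x : Fin m → K) :
    (m : ℕ∞) ≤ (vanishingIdeal K {x} : Ideal (MvPolynomial (Fin m) K)).height := by
  let φ : ℕ → MvPolynomial (Fin m) K →ₐ[K] MvPolynomial (Fin m) K := fun i =>
    aeval fun j => if (j : ℕ) < i then C (x j) else X j
  have hprime : ∀ i, (RingHom.ker (φ i)).IsPrime := fun i => RingHom.ker_isPrime _
  have hcomp : ∀ i, (φ (i + 1)).comp (φ i) = φ (i + 1) := fun i => by
    ext j : 1
    by_cases h : (j : ℕ) < i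
    · simp [φ, h, h.le]
    · simp [φ, h]
  have hle : ∀ i, RingHom.ker (φ i) ≤ RingHom.ker (φ (i + 1)) := fun i g hg => by
    rw [RingHom.mem_ker] at hg ⊢
    rw [← hcomp, AlgHom.comp_apply, hg, map_zero]
  have hlt : ∀ i, i < m → RingHom.ker (φ i) < RingHom.ker (φ (i + 1)) := fun i hi => by
    refine lt_of_le_not_ge (hle i) fun h => ?_
    have h1 : (X ⟨i, hi⟩ - C (x ⟨i, hi⟩) : MvPolynomial (Fin m) K) ∈ RingHom.ker (φ (i + 1)) := by
      simp [RingHom.mem_ker, φ]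
    have h2 := h h1
    rw [RingHom.mem_ker] at h2
    have h3 : (X ⟨i, hi⟩ - C (x ⟨i, hi⟩) : MvPolynomial (Fin m) K) = 0 := by
      simpa [φ] using h2
    have h4 := congrArg (eval fun _ => x ⟨i, hi⟩ + 1) h3
    simp at h4
  have hht : ∀ i, i ≤ m → (i : ℕ∞) ≤ (RingHom.ker (φ i)).height := by
    intro i
    induction i with
    | zero => simp
    | succ i ih =>
      intro hi
      have := hprime i
      have := hprime (i + 1)
      refine le_trans ?_ (Ideal.height_add_one_le_of_lt_of_isPrime (hlt i hi))
      push_cast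
      gcongr
      exact ih (by omega)
  refine (hht m le_rfl).trans (Ideal.height_mono fun g hg => ?_)
  rw [mem_vanishingIdeal_singleton_iff]
  have h1 : ((aeval x).comp (φ m) : MvPolynomial (Fin m) K →ₐ[K] K) = aeval x := by
    ext j
    simp [φ]
  rw [← h1, AlgHom.comp_apply, (RingHom.mem_ker).1 hg, map_zero]

/-- Eagon–Northcott consequence: if `m > q − p + τ + 1` (with `p ≤ q`), the common zero set
`V` of polynomials `f_1,…,f_τ ∈ K[y_1,…,y_m]` and of all `p×p` minors of a `p×q` polynomial
matrix `G` has no isolated points: every basic Zariski-open neighbourhood of a point of `V`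
meets `V` in another point. -/
theorem stmt14 {K : Type*} [Field K] [IsAlgClosed K] {m p q τ : ℕ}
    (hpq : p ≤ q) (hm : q - p + τ + 1 < m)
    (G : Matrix (Fin p) (Fin q) (MvPolynomial (Fin m) K))
    (f : Fin τ → MvPolynomial (Fin m) K)
    (V : Set (Fin m → K))
    (hV : V = {x | (∀ i, MvPolynomial.eval x (f i) = 0) ∧
      ∀ cols : Fin p → Fin q, Function.Injective cols →
        MvPolynomial.eval x (Matrix.det fun i j => G i (cols j)) = 0})
    (x : Fin m → K) (hx : x ∈ V)
    (h : MvPolynomial (Fin m) K) (hh : MvPolynomial.eval x h ≠ 0) :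
    ∃ y ∈ V, y ≠ x ∧ MvPolynomial.eval y h ≠ 0 := by
  subst hV
  obtain ⟨hxf, hxG⟩ := hx
  -- the only minor of a matrix without rows is `1`, so `V` would be empty
  obtain _ | n := p
  · have h0 : MvPolynomial.eval x (G.submatrix id Fin.elim0).det = 0 :=
      hxG Fin.elim0 fun i => i.elim0
    rw [Matrix.det_isEmpty, map_one] at h0
    exact absurd h0 one_ne_zero
  obtain ⟨k, rfl⟩ : ∃ k, q = k + n + 1 := ⟨q - (n + 1), by omega⟩
  let M : Ideal (MvPolynomial (Fin m) K) := MvPolynomial.vanishingIdeal K {x}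
  have hM : ∀ g, g ∈ M ↔ MvPolynomial.eval x g = 0 := fun g =>
    MvPolynomial.mem_vanishingIdeal_singleton_iff x g
  have hMp : M.IsPrime := inferInstanceAs (MvPolynomial.vanishingIdeal K {x}).IsPrime
  obtain ⟨Q, hQ, hQM, hfQ, hGQ, hne⟩ : ∃ Q : Ideal (MvPolynomial (Fin m) K), Q.IsPrime ∧ Q ≤ M ∧
      (∀ i, f i ∈ Q) ∧ RowDep G Q ∧ ¬ M ≤ Q := by
    by_contra! hcon
    have hle := height_le_of_minimal n k τ G f M (fun i => (hM _).2 (hxf i))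
      ((rowDep_iff_det_mem G M).2 fun c hc => (hM _).2 (hxG c hc)) hcon
    have := (le_height_vanishingIdeal x).trans hle
    norm_cast at this
    omega
  obtain ⟨g, hgM, hgQ⟩ := Set.not_subset.1 hne
  have hhQ : h ∉ Q := fun hq => hh ((hM h).1 (hQM hq))
  have hgh : g * h ∉ Q := fun hq => (hQ.mem_or_mem hq).elim hgQ hhQ
  rw [← MvPolynomial.IsPrime.vanishingIdeal_zeroLocus (K := K) Q,
    MvPolynomial.mem_vanishingIdeal_iff] at hgh
  push Not at hgh
  obtain ⟨y, hy, hygh⟩ := hgh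
  have hyQ : ∀ r ∈ Q, MvPolynomial.eval y r = 0 := fun r hr => hy r hr
  have hygh' : MvPolynomial.eval y g * MvPolynomial.eval y h ≠ 0 := by
    rw [← map_mul]
    exact hygh
  refine ⟨y, ⟨fun i => hyQ _ (hfQ i), fun c hc => hyQ _ ((rowDep_iff_det_mem G Q).1 hGQ c hc)⟩,
    ?_, right_ne_zero_of_mul hygh'⟩
  rintro rfl
  exact left_ne_zero_of_mul hygh' ((hM g).1 hgM)
end

section
/- Let n ≥ 1, d ≥ 2 and 1 ≤ s ≤ n be integers. For a partition λ of n, let ℓ_λ denote its number of parts and w_λ = ∏_k m_k(λ)!, where m_k(λ) is the number of parts of λ equal to k. Then, as rational numbers: (1) ∑_{λ ⊢ n, s ≤ ℓ_λ ≤ d} d^s · e_{ℓ_λ−s}(d−1, d−2, …, d−ℓ_λ) / w_λ ≤ d^s · C(n+d−1, n); and (2) ∑_{λ ⊢ n, s ≤ ℓ_λ ≤ d} n·(d+1)^s · e_{ℓ_λ−s}(d, d−1, …, d−ℓ_λ+1) / w_λ ≤ n·(d+1)^s · C(n+d, n). Here e_m(a_1,…,a_ℓ) denotes the elementary symmetric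 function of degree m in the listed integers (with e_0 = 1), and the sums range over all partitions λ of n whose number of parts ℓ_λ satisfies s ≤ ℓ_λ ≤ d. -/
/-!
Let `D = d` for the first bound and `D = d + 1` for the second. For a partition `λ` with
`ℓ ≤ D` parts, every elementary symmetric function of `D-1, …, D-ℓ` is at most
`∏_{j<ℓ} (1 + (D-1-j)) = D(D-1)⋯(D-ℓ+1)`, since the product expands into the sum of all of them
(`sum_esymm_le`).

The falling factorial counts the injections `Fin ℓ ↪ Fin D`. Each of them places the parts of
`λ` into distinct coordinates of a vector in `ℕ^D`, and a given vector arises from at most `w_λ`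
injections (`fiber_card_le`), so `D(D-1)⋯(D-ℓ+1) / w_λ` is at most the number of vectors in `ℕ^D`
whose multiset of nonzero entries is `λ` (`descFactorial_le`). For distinct partitions of `n`
these sets of vectors are disjoint, and they all lie in the set of vectors in `ℕ^D` with sum `n`,
which has `C(n+D-1, n)` elements (`main_bound`).
-/

open Finset

lemma range_eq_support {l D : ℕ} {c : Fin l → ℕ} (hc : ∀ i, c i ≠ 0) (f : Fin l ↪ Fin D) :
    Set.range f = {x | Function.extend f c 0 x ≠ 0} := by
  ext x
  constructor
  · rintro ⟨i, rfl⟩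
    simpa [f.injective.extend_apply] using hc i
  · intro hx
    by_contra hn
    exact hx (by rw [Function.extend_apply' _ _ _ hn]; rfl)

/-- Two placements `f, f₀` of the labels `c` with the same labelled result `b` have the same
range, so they differ by a permutation preserving `c`; hence at most `∏ m_k!` placements
give `b`. -/
lemma fiber_card_le {l D : ℕ} (c : Fin l → ℕ) (hc : ∀ i, c i ≠ 0) (b : Fin D → ℕ) :
    #{f : Fin l ↪ Fin D | Function.extend f c 0 = b} ≤
      ∏ k ∈ univ.image c, (Fintype.card {i // c i = k}).factorial := by
  classical
  rcases (univ.filter fun f : Fin l ↪ Fin D => Function.extend f c 0 = b).eq_empty_or_nonempty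
    with h | ⟨f₀, hf₀⟩
  · simp [h]
  rw [mem_filter_univ] at hf₀
  have hr : ∀ f : Fin l ↪ Fin D, Function.extend f c 0 = b → Set.range f = {x | b x ≠ 0} := by
    rintro f rfl
    exact range_eq_support hc f
  rw [← DomMulAct.stabilizer_card' c, Fintype.card_subtype]
  refine (card_le_card (t := (univ.filter fun g : Equiv.Perm (Fin l) => c ∘ g = c).image
    fun g => g.toEmbedding.trans f₀) ?_).trans card_image_le
  intro f hf
  rw [mem_filter_univ] at hf
  let g : Equiv.Perm (Fin l) := (Equiv.ofInjective f f.injective).trans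
    ((Equiv.setCongr ((hr f hf).trans (hr f₀ hf₀).symm)).trans
      (Equiv.ofInjective f₀ f₀.injective).symm)
  have hg : ∀ i, f₀ (g i) = f i := fun i => by
    simp only [g, Equiv.trans_apply]
    rw [Equiv.apply_ofInjective_symm f₀.injective]
    rfl
  rw [mem_image]
  refine ⟨g, ?_, by ext i; simp [hg]⟩
  rw [mem_filter_univ]
  funext i
  have h1 := f₀.injective.extend_apply c 0 (g i)
  have h2 := f.injective.extend_apply c 0 i
  rw [hf₀, hg] at h1
  rw [hf] at h2
  exact h1.symm.trans h2

/-- Writing the `ℓ` parts of `λ` into distinct cells of `Fin D` and zeros elsewhere gives all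
`D(D-1)⋯(D-ℓ+1)` placements; each vector with nonzero entries `λ` arises at most `w_λ` times. -/
lemma descFactorial_le {n D : ℕ} (lam : Nat.Partition n) :
    D.descFactorial lam.parts.card ≤
      (∏ k ∈ lam.parts.toFinset, (lam.parts.count k).factorial) *
        #{b ∈ piAntidiag (univ : Finset (Fin D)) n |
          (univ.val.map b).filter (· ≠ 0) = lam.parts} := by
  classical
  obtain ⟨L, hL⟩ := Quot.exists_rep lam.parts
  replace hL : (L : Multiset ℕ) = lam.parts := hL
  have hcard : lam.parts.card = L.length := by rw [← hL]; rfl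
  have hmap : (univ.val.map L.get : Multiset ℕ) = lam.parts := by
    rw [← hL, Fin.univ_val_map, List.ofFn_get]
  have hc : ∀ i, L.get i ≠ 0 := fun i =>
    (lam.parts_pos (by rw [← hL]; exact L.get_mem i)).ne'
  have hw : ∏ k ∈ univ.image L.get, (Fintype.card {i // L.get i = k}).factorial =
      ∏ k ∈ lam.parts.toFinset, (lam.parts.count k).factorial := by
    have : univ.image L.get = lam.parts.toFinset := by
      rw [← hmap]; rfl
    rw [this]
    refine prod_congr rfl fun k _ => ?_
    rw [← hmap, Multiset.count_map, Fintype.card_subtype]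
    congr 1
    simp [Finset.card, Finset.filter, eq_comm]
  rw [hcard, ← hw]
  have hcount := Fintype.card_embedding_eq (α := Fin L.length) (β := Fin D)
  rw [Fintype.card_fin, Fintype.card_fin] at hcount
  rw [← hcount, ← card_univ]
  refine card_le_mul_card_image_of_maps_to (f := fun f : Fin L.length ↪ Fin D =>
    Function.extend f L.get 0) ?_ _ (fun b _ => fiber_card_le L.get hc b)
  intro f _
  have hP : (univ.val.map (Function.extend f L.get 0)).filter (· ≠ 0) = lam.parts := by
    have hsupp : univ.filter (fun x => Function.extend f L.get 0 x ≠ 0) = univ.map f := by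
      ext x
      have hx := Set.ext_iff.1 (range_eq_support hc f) x
      simpa using hx.symm
    have hval := congrArg Finset.val hsupp
    rw [filter_val, map_val] at hval
    rw [Multiset.filter_map]
    change Multiset.map _ (Multiset.filter (fun x => Function.extend f L.get 0 x ≠ 0) _) = _
    rw [hval, Multiset.map_map, ← hmap]
    exact Multiset.map_congr rfl fun i _ => f.injective.extend_apply _ _ i
  rw [mem_filter]
  refine ⟨?_, hP⟩
  rw [mem_piAntidiag]
  refine ⟨?_, fun _ _ => mem_univ _⟩
  rw [← lam.parts_sum, ← hP, Multiset.filter_map]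
  exact (sum_filter_ne_zero univ).symm

/-- The elementary symmetric functions of all degrees in `D-1, …, D-l` add up to
`∏ (1 + (D-1-j)) = D(D-1)⋯(D-l+1)`, which therefore bounds each of them. -/
lemma sum_esymm_le {D l : ℕ} (hl : l ≤ D) (m : ℕ) :
    ∑ A ∈ (range l).powersetCard m, ∏ j ∈ A, (D - 1 - j) ≤ D.descFactorial l := by
  have h : D.descFactorial l = ∏ j ∈ range l, (1 + (D - 1 - j)) := by
    rw [Nat.descFactorial_eq_prod_range]
    exact prod_congr rfl fun j hj => by have := mem_range.1 hj; omega
  rw [h, prod_one_add]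
  exact sum_le_sum_of_subset (fun A hA => mem_powerset.2 (mem_powersetCard.1 hA).1)

/-- The common form of both bounds without the prefactors: part (1) is `D = d` and part (2) is
`D = d + 1`. -/
lemma main_bound (n D d s : ℕ) (hd : d ≤ D) :
    ∑ lam ∈ univ.filter
          (fun lam : Nat.Partition n => s ≤ lam.parts.card ∧ lam.parts.card ≤ d),
        ((∑ A ∈ (range lam.parts.card).powersetCard (lam.parts.card - s),
                ∏ j ∈ A, (D - 1 - j) : ℕ) : ℚ) /
          ((∏ k ∈ lam.parts.toFinset, Nat.factorial (lam.parts.count k) : ℕ) : ℚ) ≤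
      ((n + D - 1).choose n : ℚ) := by
  classical
  have key : ∑ lam ∈ univ.filter
        (fun lam : Nat.Partition n => s ≤ lam.parts.card ∧ lam.parts.card ≤ d),
      #{b ∈ piAntidiag (univ : Finset (Fin D)) n |
          (univ.val.map b).filter (· ≠ 0) = lam.parts} ≤ (n + D - 1).choose n := by
    have hcard : #(piAntidiag (univ : Finset (Fin D)) n) = (n + D - 1).choose n := by
      rw [← map_sym_eq_piAntidiag, card_map, sym_univ, card_univ, Sym.card_sym_eq_choose,
        Fintype.card_fin, add_comm D n]
    rw [← hcard, ← card_biUnion]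
    · exact card_le_card (biUnion_subset.2 fun _ _ => filter_subset _ _)
    · intro x _ y _ hxy
      change Disjoint _ _
      rw [disjoint_left]
      intro b hb hb'
      rw [mem_filter] at hb hb'
      exact hxy (Nat.Partition.ext (hb.2.symm.trans hb'.2))
  refine le_trans (sum_le_sum fun lam hlam => ?_) ((Nat.cast_sum _ _).symm.le.trans
    (Nat.cast_le.2 key))
  rw [mem_filter] at hlam
  have hw : 0 < ∏ k ∈ lam.parts.toFinset, Nat.factorial (lam.parts.count k) :=
    prod_pos fun k _ => Nat.factorial_pos _
  rw [div_le_iff₀' (by exact_mod_cast hw)]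
  exact_mod_cast (sum_esymm_le (hlam.2.2.trans hd) _).trans (descFactorial_le lam)

/-- Bounds `∑_{λ ⊢ n, s ≤ ℓ_λ ≤ d} 𝔠_λ ≤ d^s·C(n+d−1,n)` and
`∑_{λ ⊢ n, s ≤ ℓ_λ ≤ d} 𝔢_λ ≤ n·(d+1)^s·C(n+d,n)`, where for a partition `λ` of `n` with
`ℓ_λ` parts and `w_λ = ∏_k m_k(λ)!`, `𝔠_λ = d^s·e_{ℓ_λ−s}(d−1,…,d−ℓ_λ)/w_λ` and
`𝔢_λ = n·(d+1)^s·e_{ℓ_λ−s}(d,…,d−ℓ_λ+1)/w_λ`. -/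
theorem stmt19 (n d s : ℕ) (hn : 1 ≤ n) (hd : 2 ≤ d) (hs1 : 1 ≤ s) (hsn : s ≤ n) :
    (∑ lam ∈ Finset.univ.filter
          (fun lam : Nat.Partition n => s ≤ lam.parts.card ∧ lam.parts.card ≤ d),
        (d : ℚ) ^ s *
            ((∑ A ∈ (Finset.range lam.parts.card).powersetCard (lam.parts.card - s),
                ∏ j ∈ A, (d - 1 - j) : ℕ) : ℚ) /
          ((∏ k ∈ lam.parts.toFinset, Nat.factorial (lam.parts.count k) : ℕ) : ℚ) ≤
      (d : ℚ) ^ s * (Nat.choose (n + d - 1) n : ℚ)) ∧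
    (∑ lam ∈ Finset.univ.filter
          (fun lam : Nat.Partition n => s ≤ lam.parts.card ∧ lam.parts.card ≤ d),
        (n : ℚ) * ((d : ℚ) + 1) ^ s *
            ((∑ A ∈ (Finset.range lam.parts.card).powersetCard (lam.parts.card - s),
                ∏ j ∈ A, (d - j) : ℕ) : ℚ) /
          ((∏ k ∈ lam.parts.toFinset, Nat.factorial (lam.parts.count k) : ℕ) : ℚ) ≤
      (n : ℚ) * ((d : ℚ) + 1) ^ s * (Nat.choose (n + d) n : ℚ)) := by
  simp only [mul_div_assoc, ← Finset.mul_sum]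
  exact ⟨mul_le_mul_of_nonneg_left (main_bound n d d s le_rfl) (by positivity),
    mul_le_mul_of_nonneg_left (main_bound n (d + 1) d s (by omega)) (by positivity)⟩
end
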